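/- Assume the Riemann Hypothesis. Then there exists x₀ such that for every r ≥ 1 with p_r ≥ x₀ one has 1.95 ≤ ( γ_r·e^{γ} − 1 ) · √(p_r) · (log p_r)² ≤ 2.05; equivalently, γ_r = e^{−γ}( 1 + g(p_r)/(√(p_r)(log p_r)²) ) with 1.95 ≤ g(p_r) ≤ 2.05 for p_r ≥ x₀. -/

import Mathlib

/-!
Let `Z(s) = s ζ(1 + s)`, an entire function of order one. On RH its nontrivial zeros `ρ` have real
part `-1/2`, and the partial fraction expansion of `Z' / Z`, evaluated at `0` and `-1`, gives
`∑ 1 / |ρ|² = 2 + γ - log 4π ≈ 0.046`. The Laplace transform of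
`E(v) = ∑_{n ≤ e^v} Λ(n) / n - v + γ` is `(γ - Z' / Z) / s`, so inverting the transform of its
primitive expresses `∫ E` through the absolutely convergent sum `∑ e^{ρu} / ρ²`, which is at most
about `0.046 e^{-u/2}`; since `E(v) + v` is monotone, also `E(u) = o(e^{-u/4})`.

The analogue of `E` for `∑_{p ≤ e^v} log p / (p - 1)` is larger by `(1 + o(1)) e^{-v/2}`, because
powers `p^k` with `p ≤ e^v < p^k` are now counted, and those with `k = 2` dominate. Integrated
against `v⁻²` from `u = log p_r` to infinity, this bias produces the main term
`2 e^{-u/2} / u² = 2 / (√p_r (log p_r)²)`, while the zeros contribute at most `0.05` times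
`e^{-u/2} / u²`. By partial summation the integral is `log (γ_r e^γ)` up to a constant and
negligible terms. The constant vanishes by comparing `log u + γ` with
`∑_{n ≤ e^u} Λ(n) / (n log n)`, whose Laplace transform is `log ζ(1 + s) / s`.
-/

open Filter

/-- Generalized Euler constant for a finite set of primes `P`:
`γ(P) = ∏_{p∈P}(1 - 1/p) * (γ + ∑_{p∈P} log p / (p-1))`. -/
noncomputable def gammaP (P : Finset ℕ) : ℝ :=
  (∏ p ∈ P, (1 - 1 / (p : ℝ))) *
    (Real.eulerMascheroniConstant + ∑ p ∈ P, Real.log p / ((p : ℝ) - 1))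

/-- `γ_r = γ({p_1, …, p_r})`, the generalized Euler constant for the first `r` primes. -/
noncomputable def gammaR (r : ℕ) : ℝ :=
  gammaP ((Finset.range r).image (Nat.nth Nat.Prime))

/-- `p_r`, the `r`-th prime (`p_1 = 2`). -/
noncomputable def nthPrime (r : ℕ) : ℕ := Nat.nth Nat.Prime (r - 1)

section EntireFunctions

open Complex Metric Topology Asymptotics

variable {g h : ℂ → ℂ} {R B : ℝ} {z w : ℂ}

lemma exists_eq_mul_exp_of_ne_zero_on_ball (hR : 0 < R) (hg : DifferentiableOn ℂ g (ball 0 R))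
    (hne : ∀ z ∈ ball (0 : ℂ) R, g z ≠ 0) :
    ∃ l : ℂ → ℂ, l 0 = 0 ∧ ∀ z ∈ ball (0 : ℂ) R,
      HasDerivAt l (logDeriv g z) z ∧ g z = g 0 * exp (l z) := by
  obtain ⟨l, hl0, hl⟩ := ((hg.deriv isOpen_ball).div hg hne).isExactOn_ball.with_val_at 0 0
  refine ⟨l, hl0, fun z hz ↦ ⟨hl z hz, ?_⟩⟩
  have hconst : ∀ y ∈ ball (0 : ℂ) R, HasDerivAt (fun y ↦ g y * exp (-l y)) 0 y := by
    intro y hy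
    have hgy := (hg.differentiableAt (isOpen_ball.mem_nhds hy)).hasDerivAt
    refine (hgy.mul (hl y hy).neg.cexp).congr_deriv ?_
    rw [Pi.div_apply]
    have := hne y hy
    field_simp
    ring
  have heq : g z * exp (-l z) = g 0 * exp (-l 0) :=
    isOpen_ball.is_const_of_deriv_eq_zero (convex_ball _ _).isPreconnected
      (fun y hy ↦ (hconst y hy).differentiableAt.differentiableWithinAt)
      (fun y hy ↦ (hconst y hy).deriv) hz (mem_ball_self hR)
  rw [hl0, neg_zero, exp_zero, mul_one] at heq
  rw [← heq, mul_assoc, ← exp_add, neg_add_cancel, exp_zero, mul_one]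

lemma norm_deriv_le_of_norm_le_on_ball {l : ℂ → ℂ} {r δ C : ℝ} (hδ : 0 < δ)
    (hl : DifferentiableOn ℂ l (ball 0 R)) (hC : ∀ z : ℂ, ‖z‖ ≤ r + δ → ‖l z‖ ≤ C)
    (hrR : r + δ < R) (hz : ‖z‖ ≤ r) : ‖deriv l z‖ ≤ C / δ := by
  have hnorm : ∀ y ∈ closedBall z δ, ‖y‖ ≤ r + δ := fun y hy ↦ by
    have := norm_le_norm_add_norm_sub' y z
    rw [mem_closedBall, dist_eq_norm] at hy
    linarith
  refine norm_deriv_le_of_forall_mem_sphere_norm_le hδ (DifferentiableOn.diffContOnCl_ball hl ?_)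
    fun y hy ↦ hC y (hnorm y (sphere_subset_closedBall hy))
  exact fun y hy ↦ mem_ball_zero_iff.2 ((hnorm y hy).trans_lt hrR)

lemma norm_logDeriv_sub_logDeriv_le (hR : 0 < R) (hB : 0 < B)
    (hg : DifferentiableOn ℂ g (ball 0 R)) (hne : ∀ z ∈ ball (0 : ℂ) R, g z ≠ 0)
    (hb : ∀ z ∈ ball (0 : ℂ) R, ‖g z‖ ≤ ‖g 0‖ * Real.exp B)
    (hz : ‖z‖ ≤ R / 4) (hw : ‖w‖ ≤ R / 4) :
    ‖logDeriv g z - logDeriv g w‖ ≤ 128 * B / R ^ 2 * ‖z - w‖ := by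
  obtain ⟨l, hl0, hl⟩ := exists_eq_mul_exp_of_ne_zero_on_ball hR hg hne
  have hg0 : 0 < ‖g 0‖ := norm_pos_iff.2 (hne 0 (mem_ball_self hR))
  have hld : DifferentiableOn ℂ l (ball 0 R) := fun x hx ↦
    (hl x hx).1.differentiableAt.differentiableWithinAt
  have hre : Set.MapsTo l (ball 0 R) {z | z.re ≤ B} := fun x hx ↦ by
    have hx' := hb x hx
    rw [(hl x hx).2, norm_mul, norm_exp, mul_le_mul_iff_right₀ hg0] at hx'
    exact Real.exp_le_exp.1 hx'
  have hlb : ∀ x : ℂ, ‖x‖ ≤ 3 * R / 8 + R / 8 → ‖l x‖ ≤ 2 * B := fun x hx ↦ by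
    refine (borelCaratheodory_zero hB hld hre hR (mem_ball_zero_iff.2 (by linarith)) hl0).trans ?_
    rw [div_le_iff₀ (by linarith)]
    nlinarith
  have hdiff : DifferentiableOn ℂ (logDeriv g) (ball 0 R) := (hg.deriv isOpen_ball).div hg hne
  have hlog : ∀ x : ℂ, ‖x‖ ≤ R / 4 + R / 8 → ‖logDeriv g x‖ ≤ 2 * B / (R / 8) := fun x hx ↦ by
    rw [← (hl x (mem_ball_zero_iff.2 (by linarith))).1.deriv]
    exact norm_deriv_le_of_norm_le_on_ball (by positivity) hld hlb (by linarith) (by linarith)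
  have hderiv : ∀ x ∈ closedBall (0 : ℂ) (R / 4),
      ‖deriv (logDeriv g) x‖ ≤ 128 * B / R ^ 2 := fun x hx ↦ by
    convert norm_deriv_le_of_norm_le_on_ball (by positivity) hdiff hlog (by linarith)
      (mem_closedBall_zero_iff.1 hx) using 1
    field_simp
    norm_num
  refine (convex_closedBall (0 : ℂ) (R / 4)).norm_image_sub_le_of_norm_deriv_le
    (fun x hx ↦ hdiff.differentiableAt (isOpen_ball.mem_nhds ?_)) hderiv
    (mem_closedBall_zero_iff.2 hw) (mem_closedBall_zero_iff.2 hz)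
  exact closedBall_subset_ball (by linarith) hx

lemma analyticOrderAt_ne_top_of_entire (hh : Differentiable ℂ h) (hc : h w ≠ 0) (ρ : ℂ) :
    analyticOrderAt h ρ ≠ ⊤ := by
  intro htop
  have han := analyticOnNhd_univ_iff_differentiable.2 hh
  exact hc (han.eqOn_zero_of_preconnected_of_eventuallyEq_zero
    isPreconnected_univ (Set.mem_univ ρ) (analyticOrderAt_eq_top.1 htop) (Set.mem_univ w))

lemma finite_zeros_of_entire (hh : Differentiable ℂ h) (hc : h w ≠ 0) (R : ℝ) :
    {ρ : h ⁻¹' {0} | ‖(ρ : ℂ)‖ ≤ R}.Finite := by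
  have hdisc : IsDiscrete (h ⁻¹' {0}) := by
    simpa using (mem_codiscrete'.1 ((analyticOnNhd_univ_iff_differentiable.2
      hh).preimage_zero_mem_codiscrete hc)).2
  have hclosed : IsClosed (h ⁻¹' {0}) := isClosed_singleton.preimage hh.continuous
  have hfin := ((isCompact_closedBall (0 : ℂ) R).inter_right hclosed).finite
    (hdisc.mono Set.inter_subset_right)
  refine Set.Finite.of_finite_image (hfin.subset ?_) Subtype.val_injective.injOn
  rintro _ ⟨ρ, hρ, rfl⟩
  exact ⟨mem_closedBall_zero_iff.2 hρ, ρ.2⟩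

lemma exists_eq_pow_mul_of_entire (hh : Differentiable ℂ h) {ρ : ℂ}
    (ho : analyticOrderAt h ρ ≠ ⊤) :
    ∃ g : ℂ → ℂ, Differentiable ℂ g ∧ g ρ ≠ 0 ∧
      ∀ z, h z = (z - ρ) ^ analyticOrderNatAt h ρ * g z := by
  set n := analyticOrderNatAt h ρ
  obtain ⟨g₀, hg₀, hg₀ρ, hev⟩ :=
    ((hh.analyticAt ρ).analyticOrderAt_eq_natCast (n := n)).1 (Nat.cast_analyticOrderNatAt ho).symm
  refine ⟨Function.update (fun z ↦ h z / (z - ρ) ^ n) ρ (g₀ ρ), fun z ↦ ?_, by simpa using hg₀ρ,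
    fun z ↦ ?_⟩
  · rcases eq_or_ne z ρ with rfl | hz
    · refine hg₀.differentiableAt.congr_of_eventuallyEq ?_
      filter_upwards [hev] with y hy
      rcases eq_or_ne y z with rfl | hyz
      · simp
      · have : (y - z) ^ n ≠ 0 := pow_ne_zero _ (sub_ne_zero.2 hyz)
        simp only [Function.update_of_ne hyz, hy, smul_eq_mul]
        field_simp
    · have hdiv : DifferentiableAt ℂ (fun z ↦ h z / (z - ρ) ^ n) z :=
        hh.differentiableAt.div (by fun_prop) (pow_ne_zero _ (sub_ne_zero.2 hz))
      refine hdiv.congr_of_eventuallyEq ?_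
      filter_upwards [isOpen_ne.mem_nhds hz] with y hy
      exact Function.update_of_ne hy _ _
  · rcases eq_or_ne z ρ with rfl | hz
    · simpa using hev.self_of_nhds
    · have : (z - ρ) ^ n ≠ 0 := pow_ne_zero _ (sub_ne_zero.2 hz)
      rw [Function.update_of_ne hz]
      field_simp

lemma exists_eq_prod_mul_of_entire (hh : Differentiable ℂ h)
    (ho : ∀ ρ, analyticOrderAt h ρ ≠ ⊤) (Z : Finset ℂ) :
    ∃ g : ℂ → ℂ, Differentiable ℂ g ∧ (∀ ρ ∈ Z, g ρ ≠ 0) ∧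
      ∀ z, h z = (∏ ρ ∈ Z, (z - ρ) ^ analyticOrderNatAt h ρ) * g z := by
  classical
  induction Z using Finset.induction_on with
  | empty => exact ⟨h, hh, by simp, by simp⟩
  | insert a Z ha ih =>
    obtain ⟨g, hg, hgZ, hgh⟩ := ih
    have horder : analyticOrderAt h a = analyticOrderAt g a := by
      have hP : AnalyticAt ℂ (fun z ↦ ∏ ρ ∈ Z, (z - ρ) ^ analyticOrderNatAt h ρ) a :=
        Finset.analyticAt_fun_prod _ fun ρ _ ↦ by fun_prop
      have hPa : ∏ ρ ∈ Z, (a - ρ) ^ analyticOrderNatAt h ρ ≠ 0 :=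
        Finset.prod_ne_zero_iff.2 fun ρ hρ ↦
          pow_ne_zero _ (sub_ne_zero.2 (ne_of_mem_of_not_mem hρ ha).symm)
      have hmul : h = (fun z ↦ ∏ ρ ∈ Z, (z - ρ) ^ analyticOrderNatAt h ρ) * g := funext hgh
      conv_lhs => rw [hmul]
      rw [analyticOrderAt_mul hP (hg.analyticAt a), hP.analyticOrderAt_eq_zero.2 hPa, zero_add]
    obtain ⟨k, hk, hka, hkg⟩ := exists_eq_pow_mul_of_entire hg (horder ▸ ho a)
    refine ⟨k, hk, fun ρ hρ ↦ ?_, fun z ↦ ?_⟩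
    · rcases Finset.mem_insert.1 hρ with rfl | hρ
      · exact hka
      · exact right_ne_zero_of_mul (hkg ρ ▸ hgZ ρ hρ)
    · rw [Finset.prod_insert ha, hgh, hkg]
      simp only [analyticOrderNatAt, horder]
      ring

lemma logDeriv_eq_sum_add_of_eq_prod_mul {Z : Finset ℂ} {m : ℂ → ℕ} (hg : Differentiable ℂ g)
    (hgh : ∀ z, h z = (∏ ρ ∈ Z, (z - ρ) ^ m ρ) * g z) (hZ : z ∉ Z) (hz : h z ≠ 0) :
    logDeriv h z = ∑ ρ ∈ Z, m ρ * (1 / (z - ρ)) + logDeriv g z := by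
  have hne : ∀ ρ ∈ Z, z - ρ ≠ 0 := fun ρ hρ ↦ sub_ne_zero.2 (ne_of_mem_of_not_mem hρ hZ).symm
  rw [hgh] at hz
  have hprod := logDeriv_prod (f := fun ρ y ↦ (y - ρ) ^ m ρ)
    (fun ρ hρ ↦ pow_ne_zero _ (hne ρ hρ)) fun ρ _ ↦ by fun_prop
  rw [funext hgh, logDeriv_mul z (left_ne_zero_of_mul hz) (right_ne_zero_of_mul hz)
    (DifferentiableAt.fun_finsetProd fun ρ _ ↦ by fun_prop) hg.differentiableAt, hprod]
  congr 1
  refine Finset.sum_congr rfl fun ρ _ ↦ ?_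
  rw [logDeriv_fun_pow (by fun_prop)]
  simp [logDeriv_apply]

-- On the sphere of radius `2R` each factor `z - ρ` with `‖ρ‖ ≤ R` is at least as large as at the
-- centre, so dividing out the zeros preserves the bound relative to the value at the centre.
lemma norm_le_of_eq_prod_mul (hR : 0 < R) {Z : Finset ℂ} {m : ℂ → ℕ}
    (hg : Differentiable ℂ g) (hgh : ∀ z, h z = (∏ ρ ∈ Z, (z - ρ) ^ m ρ) * g z)
    (hZ : ∀ ρ ∈ Z, ‖ρ‖ ≤ R) (h0 : h 0 ≠ 0)
    (hb : ∀ z ∈ sphere (0 : ℂ) (2 * R), ‖h z‖ ≤ ‖h 0‖ * Real.exp B)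
    (hz : z ∈ closedBall (0 : ℂ) (2 * R)) : ‖g z‖ ≤ ‖g 0‖ * Real.exp B := by
  refine norm_le_of_forall_mem_frontier_norm_le (U := ball (0 : ℂ) (2 * R)) isBounded_ball
    hg.diffContOnCl (fun y hy ↦ ?_) (by rwa [closure_ball _ (by positivity)])
  rw [frontier_ball _ (by positivity)] at hy
  have hprod : ‖∏ ρ ∈ Z, (0 - ρ) ^ m ρ‖ ≤ ‖∏ ρ ∈ Z, (y - ρ) ^ m ρ‖ := by
    simp only [norm_prod, norm_pow]
    gcongr with ρ hρ
    have := norm_sub_norm_le y ρ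
    have := hZ ρ hρ
    rw [zero_sub, norm_neg]
    linarith [mem_sphere_zero_iff_norm.1 hy]
  have hhy := hb y hy
  rw [hgh] at h0
  rw [hgh, hgh 0, norm_mul, norm_mul, mul_assoc] at hhy
  exact le_of_mul_le_mul_left ((mul_le_mul_of_nonneg_right hprod (norm_nonneg _)).trans hhy)
    (norm_pos_iff.2 (left_ne_zero_of_mul h0))

lemma norm_sum_zeros_sub_logDeriv_le (hh : Differentiable ℂ h) (h0 : h 0 ≠ 0) (hR : 0 < R)
    (hB : 0 < B) (hb : ∀ z ∈ sphere (0 : ℂ) (2 * R), ‖h z‖ ≤ ‖h 0‖ * Real.exp B)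
    {Z : Finset ℂ} (hZ : ∀ ρ, ρ ∈ Z ↔ h ρ = 0 ∧ ‖ρ‖ ≤ R) (hz : h z ≠ 0) (hw : h w ≠ 0)
    (hzR : ‖z‖ ≤ R / 4) (hwR : ‖w‖ ≤ R / 4) :
    ‖∑ ρ ∈ Z, analyticOrderNatAt h ρ * (1 / (z - ρ) - 1 / (w - ρ)) -
      (logDeriv h z - logDeriv h w)‖ ≤ 128 * B / R ^ 2 * ‖z - w‖ := by
  obtain ⟨g, hg, hgZ, hgh⟩ :=
    exists_eq_prod_mul_of_entire hh (analyticOrderAt_ne_top_of_entire hh h0) Z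
  have hg0 : ∀ x ∈ ball (0 : ℂ) R, g x ≠ 0 := fun x hx hgx ↦
    hgZ x ((hZ x).2 ⟨by rw [hgh, hgx, mul_zero], (mem_ball_zero_iff.1 hx).le⟩) hgx
  have hgb : ∀ x ∈ ball (0 : ℂ) R, ‖g x‖ ≤ ‖g 0‖ * Real.exp B := fun x hx ↦
    norm_le_of_eq_prod_mul hR hg hgh (fun ρ hρ ↦ ((hZ ρ).1 hρ).2) h0 hb
      (closedBall_subset_closedBall (by linarith) (ball_subset_closedBall hx))
  have hlog : ∀ x, h x ≠ 0 → logDeriv h x =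
      ∑ ρ ∈ Z, analyticOrderNatAt h ρ * (1 / (x - ρ)) + logDeriv g x := fun x hx ↦
    logDeriv_eq_sum_add_of_eq_prod_mul hg hgh (fun hxZ ↦ hx ((hZ x).1 hxZ).1) hx
  have hsum : ∑ ρ ∈ Z, analyticOrderNatAt h ρ * (1 / (z - ρ) - 1 / (w - ρ)) -
      (logDeriv h z - logDeriv h w) = -(logDeriv g z - logDeriv g w) := by
    rw [hlog z hz, hlog w hw]
    simp only [mul_sub, Finset.sum_sub_distrib]
    ring
  rw [hsum, norm_neg]
  exact norm_logDeriv_sub_logDeriv_le hR hB hg.differentiableOn hg0 hgb hzR hwR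

theorem tendsto_sum_zeros_logDeriv_sub (hh : Differentiable ℂ h) (h0 : h 0 ≠ 0) {L : ℝ → ℝ}
    (hL : ∀ᶠ R in atTop, ∀ z ∈ sphere (0 : ℂ) R, ‖h z‖ ≤ Real.exp (L R))
    (hL0 : L =o[atTop] fun R ↦ R ^ 2) (hz : h z ≠ 0) (hw : h w ≠ 0) :
    Tendsto (fun N : ℕ ↦ ∑ ρ ∈ (finite_zeros_of_entire hh h0 N).toFinset,
      analyticOrderNatAt h ρ * (1 / (z - ρ) - 1 / (w - ρ))) atTop
      (𝓝 (logDeriv h z - logDeriv h w)) := by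
  set C : ℝ := 1 - Real.log ‖h 0‖
  set b : ℕ → ℝ := fun N ↦ |L (2 * N)| + |C| + 1 with hb
  have htwo : Tendsto (fun N : ℕ ↦ 2 * (N : ℝ)) atTop atTop :=
    tendsto_natCast_atTop_atTop.const_mul_atTop two_pos
  have hlim : Tendsto (fun N : ℕ ↦ 128 * b N / (N : ℝ) ^ 2 * ‖z - w‖) atTop (𝓝 0) := by
    have hconst : (fun _ : ℝ ↦ |C| + 1) =o[atTop] fun R : ℝ ↦ R ^ 2 :=
      isLittleO_const_left.2 <| Or.inr <|
        tendsto_norm_atTop_atTop.comp (tendsto_pow_atTop two_ne_zero)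
    have hsmall := ((hL0.norm_left.add hconst).tendsto_div_nhds_zero.comp htwo).const_mul
      (512 * ‖z - w‖)
    rw [mul_zero] at hsmall
    refine hsmall.congr fun N ↦ ?_
    simp only [hb, Function.comp_apply, Real.norm_eq_abs]
    ring
  refine tendsto_iff_norm_sub_tendsto_zero.2 (squeeze_zero' (Eventually.of_forall fun _ ↦
    norm_nonneg _) ?_ hlim)
  filter_upwards [tendsto_natCast_atTop_atTop.eventually_ge_atTop (4 * ‖z‖),
    tendsto_natCast_atTop_atTop.eventually_ge_atTop (4 * ‖w‖), eventually_gt_atTop 0,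
    htwo.eventually hL] with N hzN hwN hN hLN
  have hmap := Finset.sum_map (finite_zeros_of_entire hh h0 N).toFinset
    (Function.Embedding.subtype _) fun ρ ↦ analyticOrderNatAt h ρ * (1 / (z - ρ) - 1 / (w - ρ))
  simp only [Function.Embedding.subtype_apply] at hmap
  rw [← hmap]
  refine norm_sum_zeros_sub_logDeriv_le hh h0 (Nat.cast_pos.2 hN) (by positivity)
    (fun y hy ↦ (hLN y hy).trans ?_) (fun ρ ↦ by simp [and_comm]) hz hw (by linarith) (by linarith)
  rw [← Real.exp_log (norm_pos_iff.2 h0), ← Real.exp_add, Real.exp_le_exp]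
  linarith [le_abs_self (L (2 * N)), le_abs_self C]

lemma tendsto_finite_zeros_atTop (hh : Differentiable ℂ h) (h0 : h 0 ≠ 0) :
    Tendsto (fun N : ℕ ↦ (finite_zeros_of_entire hh h0 N).toFinset) atTop atTop := by
  refine tendsto_atTop_finset_of_monotone (fun M N hMN ↦ ?_) fun ρ ↦ ?_
  · exact Set.Finite.toFinset_mono fun ρ (hρ : ‖(ρ : ℂ)‖ ≤ M) ↦ hρ.trans (Nat.cast_le.2 hMN)
  · obtain ⟨N, hN⟩ := exists_nat_ge ‖(ρ : ℂ)‖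
    exact ⟨N, by simpa using hN⟩

end EntireFunctions

section Growth

open Complex Set Topology Asymptotics

variable {s : ℂ}

lemma norm_ofReal_cpow_neg_sub_le {a x : ℝ} (ha : 0 < a) (hax : a ≤ x) (hs : 0 ≤ s.re) :
    ‖(x : ℂ) ^ (-s) - (a : ℂ) ^ (-s)‖ ≤ ‖s‖ * a ^ (-s.re - 1) * (x - a) := by
  refine norm_image_sub_le_of_norm_deriv_le_segment' (f := fun t : ℝ ↦ (t : ℂ) ^ (-s))
    (f' := fun t ↦ -s * (t : ℂ) ^ (-s - 1)) (fun t ht ↦ ?_) (fun t ht ↦ ?_) x ⟨hax, le_rfl⟩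
  · have hd := (hasDerivAt_id (t : ℂ)).cpow_const (c := -s)
      (Or.inl (by simpa using ha.trans_le ht.1))
    simpa using hd.comp_ofReal.hasDerivWithinAt
  · rw [norm_mul, norm_neg, norm_cpow_eq_rpow_re_of_pos (ha.trans_le ht.1)]
    simp only [sub_re, neg_re, one_re]
    exact mul_le_mul_of_nonneg_left (Real.rpow_le_rpow_of_nonpos ha ht.1 (by linarith))
      (norm_nonneg s)

/-- The terms of the series `∑_{n ≥ 1} ((s - 1) n ^ (-s) + (n + 1) ^ (1 - s) - n ^ (1 - s))`, with
the index shifted to start at `0`. It represents `(s - 1) ζ(s) - 1` in the half-plane `0 < re s`. -/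
noncomputable def zetaTerm (n : ℕ) (s : ℂ) : ℂ :=
  (s - 1) * ((n + 1 : ℕ) : ℂ) ^ (-s) + ((n + 2 : ℕ) : ℂ) ^ (1 - s) - ((n + 1 : ℕ) : ℂ) ^ (1 - s)

lemma norm_zetaTerm_le (n : ℕ) (hs : 0 ≤ s.re) :
    ‖zetaTerm n s‖ ≤ ‖s - 1‖ * ‖s‖ * ((n + 1 : ℕ) : ℝ) ^ (-s.re - 1) := by
  have hn : (0 : ℝ) < (n + 1 : ℕ) := by positivity
  have key := norm_image_sub_le_of_norm_deriv_le_segment'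
    (f := fun t : ℝ ↦ (s - 1) * ((n + 1 : ℕ) : ℂ) ^ (-s) * t + (t : ℂ) ^ (1 - s))
    (f' := fun t ↦ (s - 1) * (((n + 1 : ℕ) : ℂ) ^ (-s) - (t : ℂ) ^ (-s)))
    (C := ‖s - 1‖ * ‖s‖ * ((n + 1 : ℕ) : ℝ) ^ (-s.re - 1)) (a := (n + 1 : ℕ)) (b := (n + 2 : ℕ))
    (fun t ht ↦ ?_) (fun t ht ↦ ?_) (n + 2 : ℕ) ⟨by simp, le_rfl⟩
  · convert key using 1
    · rw [zetaTerm]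
      push_cast
      congr 1
      ring
    · push_cast
      ring
  · have hd := (hasDerivAt_id (t : ℂ)).cpow_const (c := 1 - s)
      (Or.inl (by simpa using hn.trans_le ht.1))
    refine HasDerivAt.hasDerivWithinAt (HasDerivAt.congr_deriv
      ((((hasDerivAt_id (t : ℂ)).const_mul _).add hd).comp_ofReal) ?_)
    simp only [id, sub_sub_cancel_left]
    ring
  · have hle := norm_ofReal_cpow_neg_sub_le hn ht.1 hs
    rw [ofReal_natCast] at hle
    rw [norm_mul, norm_sub_rev _ ((t : ℂ) ^ (-s)), mul_assoc]
    gcongr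
    refine hle.trans (mul_le_of_le_one_right (by positivity) ?_)
    have := ht.2
    push_cast at this ⊢
    linarith

lemma summable_natCast_add_one_rpow {p : ℝ} (hp : p < -1) :
    Summable fun n : ℕ ↦ ((n + 1 : ℕ) : ℝ) ^ p :=
  (summable_nat_add_iff 1).2 (Real.summable_nat_rpow.2 hp)

lemma differentiable_zetaTerm (n : ℕ) : Differentiable ℂ (zetaTerm n) := by
  unfold zetaTerm
  fun_prop (disch := exact Or.inl (Nat.cast_ne_zero.2 (Nat.succ_ne_zero _)))

lemma tsum_zetaTerm_of_one_lt_re (hs : 1 < s.re) :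
    ∑' n, zetaTerm n s = riemannZeta₁ s - 1 := by
  have hs1 : s ≠ 1 := by rintro rfl; simp at hs
  have hsummable : Summable fun n ↦ zetaTerm n s :=
    .of_norm_bounded ((summable_natCast_add_one_rpow (by linarith)).mul_left _)
      fun n ↦ norm_zetaTerm_le n (by linarith)
  have hzeta : Tendsto (fun N ↦ ∑ n ∈ Finset.range N, ((n + 1 : ℕ) : ℂ) ^ (-s)) atTop
      (𝓝 (riemannZeta s)) := by
    have hsum := ((summable_nat_add_iff 1).2 (summable_one_div_nat_cpow.2 hs)).tendsto_sum_tsum_nat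
    rw [zeta_eq_tsum_one_div_nat_add_one_cpow hs]
    simpa only [cpow_neg, one_div, Nat.cast_add_one] using hsum
  have hpow : Tendsto (fun N : ℕ ↦ ((N + 1 : ℕ) : ℂ) ^ (1 - s)) atTop (𝓝 0) := by
    rw [tendsto_zero_iff_norm_tendsto_zero]
    simp only [norm_natCast_cpow_of_pos (Nat.succ_pos _), sub_re, one_re]
    rw [← neg_sub]
    exact (tendsto_rpow_neg_atTop (sub_pos.2 hs)).comp
      (tendsto_natCast_atTop_atTop.comp (tendsto_add_atTop_nat 1))
  have hlim := ((hzeta.const_mul (s - 1)).add hpow).sub_const 1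
  rw [riemannZeta_eq_inv_sub_mul hs1, mul_inv_cancel_left₀ (sub_ne_zero.2 hs1), add_zero] at hlim
  refine tendsto_nhds_unique hsummable.tendsto_sum_tsum_nat (hlim.congr fun N ↦ ?_)
  have htele := Finset.sum_range_sub (fun n : ℕ ↦ ((n + 1 : ℕ) : ℂ) ^ (1 - s)) N
  simp only [zetaTerm, add_sub_assoc, Finset.sum_add_distrib, ← Finset.mul_sum]
  rw [htele]
  simp

lemma tsum_zetaTerm (hs : 0 < s.re) : ∑' n, zetaTerm n s = riemannZeta₁ s - 1 := by
  obtain ⟨δ, hδ, hδs⟩ := exists_between (lt_min hs one_pos)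
  set U : Set ℂ := {z | δ < z.re} ∩ Metric.ball 0 (‖s‖ + 3)
  have hUo : IsOpen U := (isOpen_lt continuous_const continuous_re).inter Metric.isOpen_ball
  have hUc : IsPreconnected U :=
    ((convex_halfSpace_re_gt δ).inter (convex_ball _ _)).isPreconnected
  have hdiff : DifferentiableOn ℂ (fun z ↦ ∑' n, zetaTerm n z) U := by
    refine differentiableOn_tsum_of_summable_norm
      ((summable_natCast_add_one_rpow (p := -δ - 1) (by linarith)).mul_left
        ((‖s‖ + 4) * (‖s‖ + 3))) (fun n ↦ (differentiable_zetaTerm n).differentiableOn) hUo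
      fun n z hz ↦ (norm_zetaTerm_le n (hδ.trans hz.1).le).trans ?_
    have hzs := (mem_ball_zero_iff.1 hz.2).le
    have hzs1 := norm_sub_le z 1
    rw [norm_one] at hzs1
    gcongr
    · linarith
    · simp
    · exact hz.1.le
  have h2 : (2 : ℂ) ∈ U := ⟨by simpa using (hδs.trans_le (min_le_right _ _)).trans one_lt_two, by
    simpa using by linarith [norm_nonneg s]⟩
  refine (hdiff.analyticOnNhd hUo).eqOn_of_preconnected_of_eventuallyEq
    ((differentiable_riemannZeta₁.sub_const 1).differentiableOn.analyticOnNhd hUo) hUc h2 ?_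
    ⟨hδs.trans_le (min_le_left _ _), by simp⟩
  filter_upwards [(isOpen_lt continuous_const continuous_re).mem_nhds
    (show (1 : ℝ) < (2 : ℂ).re by simp)] with z hz using tsum_zetaTerm_of_one_lt_re hz

lemma exists_norm_riemannZeta₁_le_of_half_le_re :
    ∃ C ≥ 0, ∀ s : ℂ, 1 / 2 ≤ s.re → ‖riemannZeta₁ s‖ ≤ 1 + C * (‖s - 1‖ * ‖s‖) := by
  have hsum := summable_natCast_add_one_rpow (p := -(1 / 2) - 1) (by norm_num)
  refine ⟨∑' n : ℕ, ((n + 1 : ℕ) : ℝ) ^ (-(1 / 2 : ℝ) - 1), by positivity, fun s hs ↦ ?_⟩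
  have hb : ‖∑' n, zetaTerm n s‖ ≤ (∑' n : ℕ, ((n + 1 : ℕ) : ℝ) ^ (-(1 / 2 : ℝ) - 1)) *
      (‖s - 1‖ * ‖s‖) := by
    refine tsum_of_norm_bounded (hsum.hasSum.mul_right (‖s - 1‖ * ‖s‖)) fun n ↦
      (norm_zetaTerm_le n (by linarith)).trans ?_
    rw [mul_comm]
    gcongr
    simp
  rw [tsum_zetaTerm (by linarith)] at hb
  have := norm_le_norm_add_norm_sub 1 (riemannZeta₁ s)
  rw [norm_one, norm_sub_rev] at this
  linarith

lemma norm_Gamma_le_Gamma_re (hs : 0 < s.re) : ‖Gamma s‖ ≤ Real.Gamma s.re := by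
  rw [Gamma_eq_integral hs, Real.Gamma_eq_integral hs, GammaIntegral]
  refine (MeasureTheory.norm_integral_le_integral_norm _).trans_eq
    (MeasureTheory.setIntegral_congr_fun measurableSet_Ioi fun x hx ↦ ?_)
  simp [norm_cpow_eq_rpow_re_of_pos hx, norm_exp]

lemma Gamma_le_rpow_self {x : ℝ} (hx : 2 ≤ x) : Real.Gamma x ≤ x ^ x := by
  obtain ⟨n, hn⟩ : ∃ n, ⌈x⌉₊ = n + 1 := Nat.exists_eq_succ_of_ne_zero (by positivity)
  have hnx : x ≤ (n : ℝ) + 1 := by exact_mod_cast hn ▸ Nat.le_ceil x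
  have hxn : (n : ℝ) ≤ x := by
    have := (Nat.ceil_lt_add_one (by linarith : 0 ≤ x)).le
    rw [hn] at this
    push_cast at this
    linarith
  calc Real.Gamma x ≤ Real.Gamma (n + 1) :=
        Real.Gamma_strictMonoOn_Ici.monotoneOn hx (hx.trans hnx) hnx
    _ = (n.factorial : ℝ) := Real.Gamma_nat_eq_factorial n
    _ ≤ (n : ℝ) ^ (n : ℝ) := by rw [Real.rpow_natCast]; exact_mod_cast n.factorial_le_pow
    _ ≤ x ^ (n : ℝ) := by gcongr
    _ ≤ x ^ x := Real.rpow_le_rpow_of_exponent_le (by linarith) hxn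

lemma Gamma_le_two_mul_rpow {x R : ℝ} (hx : 1 / 2 ≤ x) (hxR : x ≤ R) :
    Real.Gamma x ≤ 2 * (R + 2) ^ (R + 2) := by
  have hG : Real.Gamma (x + 2) = (x + 1) * (x * Real.Gamma x) := by
    rw [← Real.Gamma_add_one (by linarith), ← Real.Gamma_add_one (by linarith)]
    ring_nf
  have hR := (Real.Gamma_strictMonoOn_Ici.monotoneOn
    (by linarith : 2 ≤ x + 2) (by linarith : 2 ≤ R + 2) (by linarith)).trans
    (Gamma_le_rpow_self (by linarith))
  have hpos := Real.Gamma_pos_of_pos (by linarith : 0 < x)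
  nlinarith [mul_le_mul_of_nonneg_right (show (3 / 4 : ℝ) ≤ (x + 1) * x by nlinarith) hpos.le]

lemma norm_cos_le_exp_norm (z : ℂ) : ‖cos z‖ ≤ Real.exp ‖z‖ := by
  have h₁ := norm_exp_le_exp_norm (z * I)
  have h₂ := norm_exp_le_exp_norm (-z * I)
  have h₃ := norm_add_le (exp (z * I)) (exp (-z * I))
  rw [norm_mul, norm_I, mul_one] at h₁ h₂
  rw [norm_neg] at h₂
  rw [cos, norm_div, norm_ofNat]
  linarith

lemma ne_neg_natCast_of_re_pos (hs : 0 < s.re) (n : ℕ) : s ≠ -n := by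
  rintro rfl
  rw [neg_re, natCast_re] at hs
  linarith [n.cast_nonneg (α := ℝ)]

lemma riemannZeta₁_one_sub (hs : ∀ n : ℕ, s ≠ -n) (hs1 : s ≠ 1) :
    riemannZeta₁ (1 - s) =
      -s * (2 * (2 * Real.pi) ^ (-s) * Gamma s * cos (Real.pi * s / 2)) *
        (riemannZeta₁ s / (s - 1)) := by
  have hs0 : s ≠ 0 := by simpa using hs 0
  have hfe := riemannZeta_one_sub hs hs1
  rw [riemannZeta_eq_inv_sub_mul hs1, riemannZeta_eq_inv_sub_mul (by simpa using hs0)] at hfe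
  have : (1 - s - 1)⁻¹ = -s⁻¹ := by rw [sub_sub_cancel_left, inv_neg]
  rw [this] at hfe
  field_simp at hfe ⊢
  linear_combination -hfe

lemma norm_riemannZeta₁_one_sub_le {R A : ℝ} (hs : 1 / 2 ≤ s.re) (hR : ‖s‖ ≤ R) (hR2 : 2 ≤ ‖s‖)
    (hA : ‖riemannZeta₁ s‖ ≤ A) :
    ‖riemannZeta₁ (1 - s)‖ ≤ R * (2 * (2 * (R + 2) ^ (R + 2)) * Real.exp (2 * R)) * A := by
  have hs1 : 1 ≤ ‖s - 1‖ := by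
    have := norm_sub_norm_le s 1
    rw [norm_one] at this
    linarith
  have hs1' : s ≠ 1 := by rintro rfl; norm_num at hR2
  have hpi : ‖(2 * Real.pi : ℂ) ^ (-s)‖ ≤ 1 := by
    have hπ := Real.pi_gt_three
    rw [← ofReal_ofNat, ← ofReal_mul, norm_cpow_eq_rpow_re_of_pos (by positivity)]
    exact Real.rpow_le_one_of_one_le_of_nonpos (by linarith)
      (by simpa using (by linarith : 0 ≤ s.re))
  have hG : ‖Gamma s‖ ≤ 2 * (R + 2) ^ (R + 2) := (norm_Gamma_le_Gamma_re (by linarith)).trans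
    (Gamma_le_two_mul_rpow hs ((re_le_norm s).trans hR))
  have hcos : ‖cos (Real.pi * s / 2)‖ ≤ Real.exp (2 * R) := by
    refine (norm_cos_le_exp_norm _).trans (Real.exp_le_exp.2 ?_)
    rw [norm_div, norm_mul, norm_real, Real.norm_of_nonneg Real.pi_nonneg, norm_ofNat]
    nlinarith [Real.pi_lt_four, norm_nonneg s]
  rw [riemannZeta₁_one_sub (ne_neg_natCast_of_re_pos (by linarith)) hs1', norm_mul, norm_mul,
    norm_neg, norm_mul, norm_mul, norm_mul, norm_div, norm_ofNat]
  have hR0 : 0 ≤ R := (norm_nonneg s).trans hR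
  gcongr
  · exact mul_le_of_le_one_right zero_le_two hpi
  · exact (div_le_self (norm_nonneg _) hs1).trans hA

lemma exists_norm_riemannZeta₁_le_exp :
    ∃ C ≥ 0, ∀ (s : ℂ) (R : ℝ), 0 ≤ R → 1 / 2 ≤ s.re → ‖s‖ ≤ R + 1 → ‖s - 1‖ ≤ R + 1 →
      ‖riemannZeta₁ s‖ ≤ (1 + C) * Real.exp (2 * R) := by
  obtain ⟨C, hC, hbound⟩ := exists_norm_riemannZeta₁_le_of_half_le_re
  refine ⟨C, hC, fun s R hR hs hs₁ hs₂ ↦ ?_⟩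
  have hprod : ‖s - 1‖ * ‖s‖ ≤ Real.exp (2 * R) := by
    rw [two_mul, Real.exp_add]
    gcongr
    · exact hs₂.trans (Real.add_one_le_exp R)
    · exact hs₁.trans (Real.add_one_le_exp R)
  have hone : 1 ≤ Real.exp (2 * R) := Real.one_le_exp (by positivity)
  linarith [hbound s hs, mul_le_mul_of_nonneg_left hprod hC]

/-- The entire function `s ζ(1 + s)`, i.e. `(s - 1) ζ(s)` recentred at the pole of `ζ`. -/
noncomputable def shiftedZeta (s : ℂ) : ℂ := riemannZeta₁ (1 + s)

lemma exists_norm_shiftedZeta_le :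
    ∃ K : ℝ, ∀ z : ℂ, 2 ≤ ‖z‖ →
      ‖shiftedZeta z‖ ≤ Real.exp (K + 5 * ‖z‖ + Real.log (‖z‖ + 2) * (‖z‖ + 2)) := by
  obtain ⟨C, hC, hgrowth⟩ := exists_norm_riemannZeta₁_le_exp
  refine ⟨Real.log (4 * (1 + C)), fun z hz ↦ ?_⟩
  set R := ‖z‖ with hR
  have hpow : 1 ≤ (R + 2) ^ (R + 2) := Real.one_le_rpow (by linarith) (by linarith)
  have hR0 : 0 ≤ R := norm_nonneg z
  rw [Real.exp_add, Real.exp_add, Real.exp_log (by positivity),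
    ← Real.rpow_def_of_pos (by positivity)]
  rcases le_total (-(1 / 2)) z.re with hre | hre
  · have hright := hgrowth (1 + z) R hR0 (by rw [add_re, one_re]; linarith)
      (by simpa [add_comm] using norm_add_le 1 z) (by rw [add_sub_cancel_left]; linarith)
    refine hright.trans (le_trans ?_ (le_mul_of_one_le_right (by positivity) hpow))
    gcongr <;> linarith
  · have hleft := norm_riemannZeta₁_one_sub_le (s := -z) (R := R) (by rw [neg_re]; linarith)
      (by simp [hR]) (by simpa using hz) (hgrowth (-z) R hR0 (by rw [neg_re]; linarith)
        (by simp [hR])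
        (by rw [← neg_add', norm_neg]; simpa using norm_add_le z 1))
    rw [sub_neg_eq_add] at hleft
    calc ‖shiftedZeta z‖
        ≤ R * (2 * (2 * (R + 2) ^ (R + 2)) * Real.exp (2 * R)) * ((1 + C) * Real.exp (2 * R)) :=
          hleft
      _ ≤ Real.exp R * (2 * (2 * (R + 2) ^ (R + 2)) * Real.exp (2 * R)) *
          ((1 + C) * Real.exp (2 * R)) := by
          gcongr
          linarith [Real.add_one_le_exp R]
      _ = 4 * (1 + C) * (Real.exp R * Real.exp (2 * R) * Real.exp (2 * R)) *
          (R + 2) ^ (R + 2) := by ring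
      _ = 4 * (1 + C) * Real.exp (5 * R) * (R + 2) ^ (R + 2) := by
          rw [← Real.exp_add, ← Real.exp_add]
          ring_nf

lemma exists_isLittleO_norm_shiftedZeta_le :
    ∃ L : ℝ → ℝ, L =o[atTop] (fun R ↦ R ^ 2) ∧
      ∀ᶠ R in atTop, ∀ z ∈ Metric.sphere (0 : ℂ) R, ‖shiftedZeta z‖ ≤ Real.exp (L R) := by
  obtain ⟨K, hK⟩ := exists_norm_shiftedZeta_le
  refine ⟨fun R ↦ K + 5 * R + Real.log (R + 2) * (R + 2), ?_, ?_⟩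
  · have hR : (fun R : ℝ ↦ R) =o[atTop] fun R ↦ R ^ 2 := by
      simpa using isLittleO_pow_pow_atTop_of_lt (𝕜 := ℝ) one_lt_two
    have hK' : (fun _ : ℝ ↦ K) =o[atTop] fun R : ℝ ↦ R ^ 2 :=
      isLittleO_const_left.2 <| Or.inr <|
        tendsto_norm_atTop_atTop.comp (tendsto_pow_atTop two_ne_zero)
    have hshift : (fun R : ℝ ↦ R + 2) =O[atTop] fun R ↦ R :=
      (isBigO_refl _ _).add (isLittleO_const_id_atTop 2).isBigO
    have hlog : (fun R : ℝ ↦ Real.log (R + 2)) =o[atTop] fun R ↦ R :=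
      (Real.isLittleO_log_id_atTop.comp_tendsto
        (tendsto_atTop_add_const_right _ 2 tendsto_id)).trans_isBigO hshift
    refine (hK'.add (hR.const_mul_left 5)).add ?_
    simpa only [pow_two] using hlog.mul_isBigO hshift
  · filter_upwards [eventually_ge_atTop 2] with R hR z hz
    obtain rfl := mem_sphere_zero_iff_norm.1 hz
    exact hK z hR

end Growth

section ShiftedZetaZeros

open Complex Set Topology

variable {s : ℂ}

lemma differentiable_shiftedZeta : Differentiable ℂ shiftedZeta :=
  differentiable_riemannZeta₁.comp (by fun_prop)

lemma shiftedZeta_zero : shiftedZeta 0 = 1 := by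
  rw [shiftedZeta, add_zero, riemannZeta₁_one]

lemma shiftedZeta_eq_mul_riemannZeta (hs : s ≠ 0) : shiftedZeta s = s * riemannZeta (1 + s) := by
  rw [shiftedZeta, riemannZeta_eq_inv_sub_mul (by simpa using hs), add_sub_cancel_left,
    mul_inv_cancel_left₀ hs]

lemma shiftedZeta_ne_zero_of_re_nonneg (hs : 0 ≤ s.re) : shiftedZeta s ≠ 0 := by
  rcases eq_or_ne s 0 with rfl | hs0
  · simp [shiftedZeta_zero]
  · rw [shiftedZeta_eq_mul_riemannZeta hs0]
    exact mul_ne_zero hs0 (riemannZeta_ne_zero_of_one_le_re (by simpa using hs))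

lemma logDeriv_shiftedZeta (hs : s ≠ 0) (hζ : riemannZeta (1 + s) ≠ 0) :
    logDeriv shiftedZeta s = 1 / s + logDeriv riemannZeta (1 + s) := by
  have hloc : shiftedZeta =ᶠ[𝓝 s] fun z ↦ z * riemannZeta (1 + z) :=
    (eventually_ne_nhds hs).mono fun z ↦ shiftedZeta_eq_mul_riemannZeta
  have hd : DifferentiableAt ℂ riemannZeta (1 + s) :=
    differentiableAt_riemannZeta (by simpa using hs)
  have hd' : DifferentiableAt ℂ (fun z ↦ riemannZeta (1 + z)) s :=
    hd.comp s (by fun_prop)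
  rw [logDeriv_apply, hloc.deriv_eq, hloc.eq_of_nhds, ← logDeriv_apply,
    logDeriv_mul (f := fun z ↦ z) s hs hζ differentiableAt_id hd', logDeriv_id',
    logDeriv_apply, logDeriv_apply, deriv_comp_const_add]

lemma logDeriv_shiftedZeta_zero : logDeriv shiftedZeta 0 = Real.eulerMascheroniConstant := by
  rw [logDeriv_apply, shiftedZeta_zero, div_one]
  change deriv (fun s ↦ riemannZeta₁ (1 + s)) 0 = _
  rw [deriv_comp_const_add, add_zero, deriv_riemannZeta₁_one]

lemma logDeriv_shiftedZeta_neg_one :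
    logDeriv shiftedZeta (-1) = Real.log (2 * Real.pi) - 1 := by
  rw [logDeriv_shiftedZeta (by simp) (by simp [riemannZeta_zero]), logDeriv_apply,
    add_neg_cancel, deriv_riemannZeta_zero, riemannZeta_zero, ofReal_log (by positivity)]
  push_cast
  ring

lemma riemannZeta₁_ne_zero_of_one_le_re (hs : 1 ≤ s.re) : riemannZeta₁ s ≠ 0 := by
  simpa [shiftedZeta] using shiftedZeta_ne_zero_of_re_nonneg (s := s - 1) (by simpa using hs)

/-- The cofactor of `cos (π s / 2)` in the functional equation `s ↦ 1 - s` of `ζ`, written for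
`shiftedZeta`. -/
noncomputable def cosCofactor (s : ℂ) : ℂ :=
  -s * (2 * (2 * Real.pi) ^ (-s) * Gamma s) * (riemannZeta₁ s / (s - 1))

lemma shiftedZeta_neg (hs : 0 < s.re) (hs1 : s ≠ 1) :
    shiftedZeta (-s) = cosCofactor s * cos (Real.pi * s / 2) := by
  rw [shiftedZeta, cosCofactor, ← sub_eq_add_neg,
    riemannZeta₁_one_sub (ne_neg_natCast_of_re_pos hs) hs1]
  ring

lemma differentiableAt_cosCofactor (hs : 1 < s.re) : DifferentiableAt ℂ cosCofactor s := by
  have hs1 : s - 1 ≠ 0 := sub_ne_zero.2 (by rintro rfl; simp at hs)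
  have hΓ := differentiableAt_Gamma s (ne_neg_natCast_of_re_pos (by linarith))
  have hζ := differentiable_riemannZeta₁ s
  have hpow : DifferentiableAt ℂ (fun z ↦ (2 * Real.pi : ℂ) ^ (-z)) s :=
    (differentiableAt_neg_iff.2 differentiableAt_id).const_cpow (Or.inl (by simp [Real.pi_ne_zero]))
  unfold cosCofactor
  fun_prop (disch := assumption)

lemma cosCofactor_ne_zero (hs : 1 < s.re) : cosCofactor s ≠ 0 := by
  have hs0 : s ≠ 0 := by rintro rfl; norm_num at hs
  have hs1 : s - 1 ≠ 0 := sub_ne_zero.2 (by rintro rfl; simp at hs)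
  have hΓ := Gamma_ne_zero (ne_neg_natCast_of_re_pos (s := s) (by linarith))
  have hζ := riemannZeta₁_ne_zero_of_one_le_re hs.le
  simp [cosCofactor, cpow_eq_zero_iff, hs0, hs1, hΓ, hζ, Real.pi_ne_zero]

lemma one_lt_re_two_mul_add_three (n : ℕ) : 1 < (2 * n + 3 : ℂ).re := by
  have h : (2 * n + 3 : ℂ).re = 2 * n + 3 := by simp
  linarith [n.cast_nonneg (α := ℝ)]

lemma cos_pi_mul_two_mul_add_three_div_two (n : ℕ) :
    cos (Real.pi * (2 * n + 3) / 2) = 0 :=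
  cos_eq_zero_iff.2 ⟨n + 1, by push_cast; ring⟩

lemma shiftedZeta_neg_two_mul_add_three (n : ℕ) : shiftedZeta (-(2 * n + 3)) = 0 := by
  have hre₁ := one_lt_re_two_mul_add_three n
  rw [shiftedZeta_neg (zero_lt_one.trans hre₁) (fun h ↦ ?_), cos_pi_mul_two_mul_add_three_div_two]
  · ring
  · rw [h, one_re] at hre₁
    exact hre₁.false

lemma deriv_shiftedZeta_neg_two_mul_add_three_ne_zero (n : ℕ) :
    deriv shiftedZeta (-(2 * n + 3)) ≠ 0 := by
  have hcos := cos_pi_mul_two_mul_add_three_div_two n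
  have hre := one_lt_re_two_mul_add_three n
  generalize (2 * n + 3 : ℂ) = a at hcos hre ⊢
  have hsin : sin (Real.pi * a / 2) ≠ 0 := fun hsin ↦ by
    simpa [hsin, hcos] using sin_sq_add_cos_sq (Real.pi * a / 2)
  have hloc : (fun z ↦ shiftedZeta (-z)) =ᶠ[𝓝 a] cosCofactor * fun z ↦ cos (Real.pi * z / 2) := by
    filter_upwards [continuous_re.continuousAt.eventually_const_lt hre] with z hz
    exact shiftedZeta_neg (by linarith) (by rintro rfl; simp at hz)
  have hderiv : HasDerivAt (fun z : ℂ ↦ cos (Real.pi * z / 2))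
      (-sin (Real.pi * a / 2) * (Real.pi / 2)) a := by
    simpa using (((hasDerivAt_id a).const_mul (Real.pi : ℂ)).div_const 2).ccos
  have hflip := deriv_comp_neg shiftedZeta a
  rw [hloc.deriv_eq, ((differentiableAt_cosCofactor hre).hasDerivAt.mul hderiv).deriv, hcos,
    mul_zero, zero_add] at hflip
  rw [← neg_ne_zero, ← hflip]
  exact mul_ne_zero (cosCofactor_ne_zero hre)
    (mul_ne_zero (neg_ne_zero.2 hsin) (by simp [Real.pi_ne_zero]))

lemma analyticOrderNatAt_shiftedZeta_neg_two_mul_add_three (n : ℕ) :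
    analyticOrderNatAt shiftedZeta (-(2 * n + 3)) = 1 := by
  rw [analyticOrderNatAt,
    (differentiable_shiftedZeta.analyticAt _).analyticOrderAt_eq_one_of_zero_deriv_ne_zero
      (shiftedZeta_neg_two_mul_add_three n) (deriv_shiftedZeta_neg_two_mul_add_three_ne_zero n),
    ENat.toNat_one]

lemma re_eq_or_eq_of_shiftedZeta_eq_zero (hRH : RiemannHypothesis) (hs : shiftedZeta s = 0) :
    s.re = -1 / 2 ∨ ∃ n : ℕ, s = -(2 * n + 3) := by
  have hs0 : s ≠ 0 := by rintro rfl; simp [shiftedZeta_zero] at hs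
  have hζ : riemannZeta (1 + s) = 0 :=
    (mul_eq_zero.1 (shiftedZeta_eq_mul_riemannZeta hs0 ▸ hs)).resolve_left hs0
  by_cases htriv : ∃ n : ℕ, 1 + s = -2 * (n + 1)
  · obtain ⟨n, hn⟩ := htriv
    exact Or.inr ⟨n, by linear_combination hn⟩
  · have hre := hRH _ hζ htriv (by simpa using hs0)
    rw [add_re, one_re] at hre
    exact Or.inl (by linarith)

end ShiftedZetaZeros

section ZeroSums

open Complex Set Topology

lemma hasSum_of_nonneg_of_tendsto {ι : Type*} {f : ι → ℝ} {t : ℕ → Finset ι} {a : ℝ}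
    (hf : ∀ i, 0 ≤ f i) (ht : Tendsto t atTop atTop)
    (ha : Tendsto (fun N ↦ ∑ i ∈ t N, f i) atTop (𝓝 a)) : HasSum f a := by
  have hsum : Summable f := summable_of_sum_le hf fun u ↦ ge_of_tendsto ha <|
    (ht.eventually_ge_atTop u).mono fun N hN ↦
      Finset.sum_le_sum_of_subset_of_nonneg hN fun i _ _ ↦ hf i
  exact tendsto_nhds_unique (hsum.hasSum.comp ht) ha ▸ hsum.hasSum

lemma harmonic_two_mul_add_one_sub (N : ℕ) :
    (harmonic (2 * N + 1) - harmonic N : ℝ) =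
      1 - ∑ n ∈ Finset.range N, (1 / (2 * n + 2) - 1 / (2 * n + 3) : ℝ) := by
  induction N with
  | zero => simp
  | succ N ih =>
    rw [Finset.sum_range_succ, show 2 * (N + 1) + 1 = 2 * N + 1 + 1 + 1 by ring,
      harmonic_succ (2 * N + 1 + 1), harmonic_succ (2 * N + 1), harmonic_succ N]
    push_cast
    have h₁ : (2 * N + 1 + 1 : ℝ)⁻¹ = 1 / (2 * N + 2) := by rw [add_assoc, one_div]; norm_num
    have h₂ : (2 * N + 1 + 1 + 1 : ℝ)⁻¹ = 1 / (2 * N + 3) := by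
      rw [add_assoc, add_assoc, one_div]; norm_num
    have h₃ : (N + 1 : ℝ)⁻¹ = 2 * (1 / (2 * N + 2)) := by field_simp
    linarith

lemma hasSum_one_div_sub_one_div_two_mul_add :
    HasSum (fun n : ℕ ↦ (1 / (2 * n + 2) - 1 / (2 * n + 3) : ℝ)) (1 - Real.log 2) := by
  have hnonneg (n : ℕ) : 0 ≤ (1 / (2 * n + 2) - 1 / (2 * n + 3) : ℝ) :=
    sub_nonneg.2 (one_div_le_one_div_of_le (by positivity) (by linarith))
  refine (hasSum_iff_tendsto_nat_of_nonneg hnonneg _).2 ?_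
  have hodd : Tendsto (fun N : ℕ ↦ 2 * N + 1) atTop atTop :=
    tendsto_atTop_mono (fun N ↦ by simp only [id_eq]; lia) tendsto_id
  have hγ := (Real.tendsto_harmonic_sub_log.comp hodd).sub Real.tendsto_harmonic_sub_log
  have hlog : Tendsto (fun N : ℕ ↦ Real.log (2 + 1 / N)) atTop (𝓝 (Real.log 2)) := by
    have := (tendsto_one_div_atTop_nhds_zero_nat (𝕜 := ℝ)).const_add 2
    rw [add_zero] at this
    exact this.log two_ne_zero
  refine (((hγ.add hlog).const_sub 1).congr' ?_).trans (by simp)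
  filter_upwards [eventually_gt_atTop 0] with N hN
  have hlogN : Real.log (2 + 1 / N) = Real.log (2 * N + 1) - Real.log N := by
    rw [← Real.log_div (by positivity) (by positivity)]
    congr 1
    field_simp
  have hharm := harmonic_two_mul_add_one_sub N
  simp only [Function.comp_apply, hlogN]
  push_cast
  linarith

/-- The zeros of `shiftedZeta`; the zero `ρ` here is the zero `1 + ρ` of `ζ`. -/
abbrev ShiftedZetaZero : Type := shiftedZeta ⁻¹' {0}

/-- The multiplicity of a zero of `shiftedZeta`, as a real number. -/
noncomputable def zeroMult (ρ : ShiftedZetaZero) : ℝ := analyticOrderNatAt shiftedZeta ρ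

/-- The zeros of `shiftedZeta` on the line `re s = -1/2`: under the Riemann hypothesis these are
exactly the ones coming from nontrivial zeros of `ζ`. -/
def criticalZeros : Set ShiftedZetaZero := {ρ | (ρ : ℂ).re = -1 / 2}

/-- The zero of `shiftedZeta` coming from the trivial zero `-2 (n + 1)` of `ζ`. -/
noncomputable def trivialZero (n : ℕ) : ShiftedZetaZero :=
  ⟨-(2 * n + 3), shiftedZeta_neg_two_mul_add_three n⟩

lemma re_trivialZero (n : ℕ) : (trivialZero n : ℂ).re = -(2 * n + 3) := by
  simp [trivialZero]

lemma zeroMult_nonneg (ρ : ShiftedZetaZero) : 0 ≤ zeroMult ρ := Nat.cast_nonneg _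

lemma zeroMult_trivialZero (n : ℕ) : zeroMult (trivialZero n) = 1 := by
  rw [zeroMult, trivialZero, analyticOrderNatAt_shiftedZeta_neg_two_mul_add_three, Nat.cast_one]

lemma trivialZero_injective : Function.Injective trivialZero := fun m n h ↦ by
  simpa [trivialZero] using h

lemma range_trivialZero (hRH : RiemannHypothesis) : range trivialZero = criticalZerosᶜ := by
  ext ρ
  constructor
  · rintro ⟨n, rfl⟩ hn
    have hre : (trivialZero n : ℂ).re = -1 / 2 := hn
    rw [re_trivialZero] at hre
    linarith [n.cast_nonneg (α := ℝ)]
  · intro hρ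
    obtain ⟨n, hn⟩ := (re_eq_or_eq_of_shiftedZeta_eq_zero hRH ρ.2).resolve_left hρ
    exact ⟨n, Subtype.ext hn.symm⟩

lemma hasSum_indicator_compl_criticalZeros_iff (hRH : RiemannHypothesis) {f : ShiftedZetaZero → ℝ}
    {a : ℝ} : HasSum (criticalZerosᶜ.indicator f) a ↔ HasSum (f ∘ trivialZero) a := by
  rw [← range_trivialZero hRH,
    ← trivialZero_injective.hasSum_iff fun ρ hρ ↦ indicator_of_notMem hρ f]
  simp [Function.comp_def]

lemma one_div_neg_one_sub_of_re_eq {ρ : ℂ} (hρ : ρ.re = -1 / 2) :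
    1 / (-1 - ρ) - 1 / (0 - ρ) = -(1 / ‖ρ‖ ^ 2 : ℝ) := by
  have hρ0 : ρ ≠ 0 := by rintro rfl; norm_num at hρ
  have hconj : -1 - ρ = (starRingEnd ℂ) ρ := by
    apply Complex.ext <;> simp [hρ]
    norm_num
  have hnorm : ((‖ρ‖ ^ 2 : ℝ) : ℂ) = ρ * (-1 - ρ) := by
    rw [hconj, mul_conj, normSq_eq_norm_sq]
  have hρ1 : -1 - ρ ≠ 0 := by rw [hconj]; simpa using hρ0
  rw [ofReal_div, ofReal_one, hnorm, zero_sub]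
  field_simp
  ring

lemma zeroMult_mul_one_div_neg_one_sub (hRH : RiemannHypothesis) (ρ : ShiftedZetaZero) :
    (zeroMult ρ * (1 / (-1 - ρ) - 1 / (0 - ρ)) : ℂ) =
      (criticalZerosᶜ.indicator (fun ρ ↦ 1 / (-1 - (ρ : ℂ).re) - 1 / (0 - (ρ : ℂ).re)) ρ -
        criticalZeros.indicator (fun ρ ↦ zeroMult ρ / ‖(ρ : ℂ)‖ ^ 2) ρ : ℝ) := by
  by_cases hρ : ρ ∈ criticalZeros
  · rw [indicator_of_notMem (notMem_compl_iff.2 hρ), indicator_of_mem hρ,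
      one_div_neg_one_sub_of_re_eq hρ]
    push_cast
    ring
  · rw [indicator_of_mem (mem_compl hρ), indicator_of_notMem hρ]
    obtain ⟨n, rfl⟩ := (range_trivialZero hRH).ge hρ
    rw [zeroMult_trivialZero, re_trivialZero, trivialZero]
    push_cast
    ring

lemma tendsto_sum_zeroMult_mul {z w : ℂ} (hz : shiftedZeta z ≠ 0) (hw : shiftedZeta w ≠ 0) :
    ∃ t : ℕ → Finset ShiftedZetaZero, Tendsto t atTop atTop ∧
      Tendsto (fun N ↦ ∑ ρ ∈ t N, (zeroMult ρ * (1 / (z - ρ) - 1 / (w - ρ)) : ℂ)) atTop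
        (𝓝 (logDeriv shiftedZeta z - logDeriv shiftedZeta w)) := by
  obtain ⟨L, hL, hbound⟩ := exists_isLittleO_norm_shiftedZeta_le
  have h0 : shiftedZeta 0 ≠ 0 := shiftedZeta_ne_zero_of_re_nonneg le_rfl
  refine ⟨_, tendsto_finite_zeros_atTop differentiable_shiftedZeta h0, ?_⟩
  simpa only [zeroMult, ofReal_natCast] using
    tendsto_sum_zeros_logDeriv_sub differentiable_shiftedZeta h0 hbound hL hz hw

theorem hasSum_indicator_criticalZeros (hRH : RiemannHypothesis) :
    HasSum (criticalZeros.indicator fun ρ ↦ zeroMult ρ / ‖(ρ : ℂ)‖ ^ 2)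
      (2 + Real.eulerMascheroniConstant - Real.log (4 * Real.pi)) := by
  have htriv : HasSum
      (criticalZerosᶜ.indicator fun ρ ↦ 1 / (-1 - (ρ : ℂ).re) - 1 / (0 - (ρ : ℂ).re))
      (1 - Real.log 2) := by
    refine (hasSum_indicator_compl_criticalZeros_iff hRH).2
      (hasSum_one_div_sub_one_div_two_mul_add.congr_fun fun n ↦ ?_)
    rw [Function.comp_apply, re_trivialZero]
    congr 2 <;> ring
  have hz : shiftedZeta (-1) ≠ 0 := by
    rw [shiftedZeta_eq_mul_riemannZeta (by simp), add_neg_cancel, riemannZeta_zero]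
    norm_num
  obtain ⟨t, ht, hlim⟩ := tendsto_sum_zeroMult_mul hz (shiftedZeta_ne_zero_of_re_nonneg zero_re.ge)
  simp only [zeroMult_mul_one_div_neg_one_sub hRH, ← ofReal_sum, Finset.sum_sub_distrib,
    logDeriv_shiftedZeta_neg_one, logDeriv_shiftedZeta_zero] at hlim
  have hreal := (continuous_re.tendsto _).comp hlim
  have hcrit := (htriv.comp ht).sub hreal
  refine hasSum_of_nonneg_of_tendsto (t := t) (fun ρ ↦ ?_) ht ((hcrit.congr fun N ↦ ?_).trans ?_)
  · exact indicator_nonneg (fun ρ _ ↦ div_nonneg (zeroMult_nonneg ρ) (sq_nonneg _)) ρ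
  · simp
  · have h4 : Real.log (4 * Real.pi) = Real.log 2 + Real.log (2 * Real.pi) := by
      rw [← Real.log_mul two_ne_zero (by positivity)]
      ring_nf
    refine le_of_eq (congrArg 𝓝 ?_)
    rw [h4]
    simp
    ring

lemma harmonic_256_lt : (harmonic 256 : ℝ) < 6.1244 := by
  have h : harmonic 256 < 61244 / 10000 := by decide +kernel
  calc (harmonic 256 : ℝ) < ((61244 / 10000 : ℚ) : ℝ) := Rat.cast_lt.2 h
    _ = 6.1244 := by norm_num

lemma eulerMascheroniConstant_lt : Real.eulerMascheroniConstant < 0.5793 := by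
  refine (Real.eulerMascheroniConstant_lt_eulerMascheroniSeq' 256).trans ?_
  have hlog : Real.log 256 = 8 * Real.log 2 := by
    rw [show (256 : ℝ) = 2 ^ 8 by norm_num, Real.log_pow]
    norm_num
  rw [Real.eulerMascheroniSeq', if_neg (by norm_num), Nat.cast_ofNat, hlog]
  linarith [Real.log_two_gt_d9, harmonic_256_lt]

lemma lt_log_four_mul_pi : 2.53 < Real.log (4 * Real.pi) := by
  rw [Real.lt_log_iff_exp_lt (by positivity)]
  have hfrac : Real.exp 0.53 ≤ 1.69895 := by
    have := Real.exp_bound' (x := 0.53) (n := 6) (by norm_num) (by norm_num) (by norm_num)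
    norm_num [Finset.sum_range_succ, Nat.factorial] at this ⊢
    linarith
  calc Real.exp 2.53 = Real.exp 1 ^ 2 * Real.exp 0.53 := by
        rw [← Real.exp_nat_mul, ← Real.exp_add]
        norm_num
    _ ≤ (2.71829 : ℝ) ^ 2 * 1.69895 := by
        gcongr
        linarith [Real.exp_one_lt_d9]
    _ < 4 * 3.1415 := by norm_num
    _ < 4 * Real.pi := by linarith [Real.pi_gt_d4]

lemma tsum_indicator_criticalZeros_lt (hRH : RiemannHypothesis) :
    ∑' ρ, criticalZeros.indicator (fun ρ ↦ zeroMult ρ / ‖(ρ : ℂ)‖ ^ 2) ρ < 0.0499 := by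
  rw [(hasSum_indicator_criticalZeros hRH).tsum_eq]
  linarith [eulerMascheroniConstant_lt, lt_log_four_mul_pi]

lemma summable_zeroMult_div_normSq (hRH : RiemannHypothesis) :
    Summable fun ρ : ShiftedZetaZero ↦ zeroMult ρ / ‖(ρ : ℂ)‖ ^ 2 := by
  have htriv : Summable fun n : ℕ ↦ 1 / ((n : ℝ) + 1) ^ 2 := by
    simpa using (summable_nat_add_iff 1).2 (Real.summable_one_div_nat_pow.2 one_lt_two)
  have hcompl : Summable (criticalZerosᶜ.indicator fun ρ ↦ zeroMult ρ / ‖(ρ : ℂ)‖ ^ 2) := by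
    refine ((hasSum_indicator_compl_criticalZeros_iff hRH).2
      (Summable.of_nonneg_of_le (fun n ↦ ?_) (fun n ↦ ?_) htriv).hasSum).summable
    · exact div_nonneg (zeroMult_nonneg _) (sq_nonneg _)
    · have hnorm : ‖(trivialZero n : ℂ)‖ = 2 * n + 3 := by
        rw [trivialZero, norm_neg]
        exact_mod_cast norm_natCast (2 * n + 3)
      rw [Function.comp_apply, zeroMult_trivialZero, hnorm]
      exact one_div_le_one_div_of_le (by positivity) (by gcongr <;> linarith)
  exact ((hasSum_indicator_criticalZeros hRH).summable.add hcompl).congr fun ρ ↦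
    congrFun (indicator_self_add_compl _ _) ρ

lemma re_le_of_mem_criticalZeros_compl (hRH : RiemannHypothesis) {ρ : ShiftedZetaZero}
    (hρ : ρ ∉ criticalZeros) : (ρ : ℂ).re ≤ -3 := by
  obtain ⟨n, rfl⟩ := (range_trivialZero hRH).ge hρ
  rw [re_trivialZero]
  linarith [n.cast_nonneg (α := ℝ)]

lemma ShiftedZetaZero.re_le (ρ : ShiftedZetaZero) (hRH : RiemannHypothesis) :
    (ρ : ℂ).re ≤ -1 / 2 := by
  by_cases hρ : ρ ∈ criticalZeros
  · exact hρ.le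
  · exact (re_le_of_mem_criticalZeros_compl hRH hρ).trans (by norm_num)

lemma ShiftedZetaZero.ne_zero (ρ : ShiftedZetaZero) : (ρ : ℂ) ≠ 0 := fun h ↦
  shiftedZeta_ne_zero_of_re_nonneg (by simp [h]) ρ.2

lemma norm_zeroMult_div_mul_sub_le (hRH : RiemannHypothesis) {s : ℂ} (hs : 0 < s.re)
    (ρ : ShiftedZetaZero) :
    ‖(zeroMult ρ / (-ρ * (s - ρ)) : ℂ)‖ ≤ (2 * ‖s‖ + 1) * (zeroMult ρ / ‖(ρ : ℂ)‖ ^ 2) := by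
  have hρ0 : 0 < ‖(ρ : ℂ)‖ := norm_pos_iff.2 ρ.ne_zero
  have hsρ : 1 / 2 ≤ ‖s - ρ‖ := by
    have := re_le_norm (s - ρ)
    rw [sub_re] at this
    linarith [ρ.re_le hRH]
  have hρ : ‖(ρ : ℂ)‖ ≤ (2 * ‖s‖ + 1) * ‖s - ρ‖ := by
    have := norm_le_norm_add_norm_sub s (ρ : ℂ)
    nlinarith [norm_nonneg s]
  rw [norm_div, norm_mul, norm_neg, norm_real, Real.norm_of_nonneg (zeroMult_nonneg ρ), mul_div,
    div_le_div_iff₀ (by positivity) (by positivity)]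
  have := mul_le_mul_of_nonneg_left hρ (mul_nonneg (zeroMult_nonneg ρ) hρ0.le)
  linarith

theorem hasSum_zeroMult_div_mul_sub (hRH : RiemannHypothesis) {s : ℂ} (hs : 0 < s.re) :
    HasSum (fun ρ : ShiftedZetaZero ↦ (zeroMult ρ / (-ρ * (s - ρ)) : ℂ))
      ((Real.eulerMascheroniConstant - logDeriv shiftedZeta s) / s) := by
  have hs0 : s ≠ 0 := by rintro rfl; simp at hs
  have hsum : Summable fun ρ : ShiftedZetaZero ↦ (zeroMult ρ / (-ρ * (s - ρ)) : ℂ) :=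
    .of_norm_bounded ((summable_zeroMult_div_normSq hRH).mul_left (2 * ‖s‖ + 1))
      (norm_zeroMult_div_mul_sub_le hRH hs)
  obtain ⟨t, ht, hlim⟩ := tendsto_sum_zeroMult_mul
    (shiftedZeta_ne_zero_of_re_nonneg zero_re.ge) (shiftedZeta_ne_zero_of_re_nonneg hs.le)
  rw [logDeriv_shiftedZeta_zero] at hlim
  refine tendsto_nhds_unique (hsum.hasSum.comp ht) ((hlim.div_const s).congr fun N ↦ ?_) ▸
    hsum.hasSum
  rw [Finset.sum_div]
  refine Finset.sum_congr rfl fun ρ _ ↦ ?_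
  have hρ := ρ.ne_zero
  have hsρ : s - ρ ≠ 0 := sub_ne_zero.2 fun h ↦ by
    linarith [ρ.re_le hRH, congrArg re h]
  rw [zero_sub]
  field_simp
  ring

end ZeroSums

section LaplaceTransform

open Complex MeasureTheory Set Topology
open scoped FourierTransform

lemma integrable_tsum_of_summable_integral_norm {α ι : Type*} [Countable ι] [MeasurableSpace α]
    {μ : Measure α} {F : ι → α → ℂ} (hF : ∀ i, Integrable (F i) μ)
    (hsum : Summable fun i ↦ ∫ x, ‖F i x‖ ∂μ) : Integrable (fun x ↦ ∑' i, F i x) μ := by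
  have hfin : ∫⁻ x, ∑' i, ‖F i x‖ₑ ∂μ < ⊤ := by
    rw [lintegral_tsum fun i ↦ (hF i).1.enorm, lt_top_iff_ne_top]
    simp_rw [← ofReal_integral_norm_eq_lintegral_enorm (hF _)]
    exact hsum.tsum_ofReal_ne_top
  have hae : ∀ᵐ x ∂μ, Summable fun i ↦ F i x := by
    filter_upwards [ae_lt_top' (.tsum fun i ↦ (hF i).1.enorm) hfin.ne] with x hx
    exact .of_nnnorm (tsum_enorm_ne_top_iff_summable_nnnorm.1 hx.ne)
  refine ⟨aestronglyMeasurable_of_tendsto_ae (u := (atTop : Filter (Finset ι)))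
    (f := fun t x ↦ ∑ i ∈ t, F i x) (fun t ↦ ?_) (hae.mono fun x hx ↦ hx.hasSum), ?_⟩
  · exact t.aestronglyMeasurable_fun_sum fun i _ ↦ (hF i).1
  · exact (lintegral_mono fun x ↦ enorm_tsum_le_tsum_enorm).trans_lt hfin

/-- The Laplace transform `∫₀^∞ f(u) e^{-su} du` converges absolutely and equals `a`
(compare `HasMellin`). -/
def HasLaplace (f : ℝ → ℂ) (s a : ℂ) : Prop :=
  IntegrableOn (fun u : ℝ ↦ f u * cexp (-s * u)) (Ioi 0) ∧
    ∫ u in Ioi (0 : ℝ), f u * cexp (-s * u) = a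

namespace HasLaplace

variable {f g : ℝ → ℂ} {s a b : ℂ}

lemma congr (hf : HasLaplace f s a) (h : EqOn f g (Ioi 0)) : HasLaplace g s a := by
  have he : EqOn (fun u : ℝ ↦ f u * cexp (-s * u)) (fun u : ℝ ↦ g u * cexp (-s * u)) (Ioi 0) :=
    fun u hu ↦ by simp only [h hu]
  exact ⟨hf.1.congr_fun he measurableSet_Ioi,
    (setIntegral_congr_fun measurableSet_Ioi he).symm.trans hf.2⟩

lemma add (hf : HasLaplace f s a) (hg : HasLaplace g s b) :
    HasLaplace (fun u ↦ f u + g u) s (a + b) := by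
  simp only [HasLaplace, add_mul]
  exact ⟨hf.1.add hg.1, by rw [integral_add hf.1 hg.1, hf.2, hg.2]⟩

lemma const_mul (hf : HasLaplace f s a) (c : ℂ) : HasLaplace (fun u ↦ c * f u) s (c * a) := by
  simp only [HasLaplace, mul_assoc]
  exact ⟨hf.1.const_mul c, by rw [integral_const_mul, hf.2]⟩

lemma sub (hf : HasLaplace f s a) (hg : HasLaplace g s b) :
    HasLaplace (fun u ↦ f u - g u) s (a - b) := by
  simpa only [neg_one_mul, ← sub_eq_add_neg] using hf.add (hg.const_mul (-1))

lemma primitive (hf : HasLaplace f s a) (hs : 0 < s.re) :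
    HasLaplace (fun u ↦ ∫ v in 0..u, f v) s (a / s) := by
  have hexp : IntegrableOn (fun u : ℝ ↦ cexp (-s * u)) (Ioi 0) :=
    integrableOn_exp_mul_complex_Ioi (by simpa using hs) 0
  have hconv (u : ℝ) : ∫ v in 0..u, ContinuousLinearMap.mul ℝ ℂ (f v * cexp (-s * v))
      (cexp (-s * (u - v : ℝ))) = (∫ v in 0..u, f v) * cexp (-s * u) := by
    rw [← intervalIntegral.integral_mul_const]
    refine intervalIntegral.integral_congr fun v _ ↦ ?_
    simp only [ContinuousLinearMap.mul_apply', mul_assoc, ← Complex.exp_add]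
    congr 2
    push_cast
    ring
  constructor
  · have h := integrable_posConvolution hf.1 hexp (ContinuousLinearMap.mul ℝ ℂ)
    rw [posConvolution, integrable_indicator_iff measurableSet_Ioi] at h
    simpa only [hconv] using h
  · have h := integral_posConvolution hf.1 hexp (ContinuousLinearMap.mul ℝ ℂ)
    simp only [hconv] at h
    rw [h, ContinuousLinearMap.mul_apply', hf.2, integral_exp_mul_complex_Ioi (by simpa using hs)]
    simp [div_eq_mul_inv]

lemma integral_norm_le (hf : HasLaplace f s a) (hs : 0 < s.re) {B : ℝ}
    (hB : ∀ u > 0, ‖f u‖ ≤ B) : ∫ u in Ioi (0 : ℝ), ‖f u * cexp (-s * u)‖ ≤ B / s.re := by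
  have hre : -s.re < 0 := by simpa using hs
  calc ∫ u in Ioi (0 : ℝ), ‖f u * cexp (-s * u)‖
      ≤ ∫ u in Ioi (0 : ℝ), B * Real.exp (-s.re * u) := by
        refine setIntegral_mono_on hf.1.norm ((integrableOn_exp_mul_Ioi hre 0).const_mul B)
          measurableSet_Ioi fun u hu ↦ ?_
        rw [norm_mul, Complex.norm_exp, re_mul_ofReal, neg_re]
        gcongr
        exact hB u hu
    _ = B / s.re := by
        rw [integral_const_mul, integral_exp_mul_Ioi hre]
        simp [div_eq_mul_inv]

lemma tsum {ι : Type*} [Countable ι] {F : ι → ℝ → ℂ} {c : ι → ℂ}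
    (hF : ∀ i, HasLaplace (F i) s (c i)) (hc : HasSum c a)
    (hsum : Summable fun i ↦ ∫ u in Ioi (0 : ℝ), ‖F i u * cexp (-s * u)‖) :
    HasLaplace (fun u ↦ ∑' i, F i u) s a := by
  simp only [HasLaplace, ← tsum_mul_right]
  refine ⟨integrable_tsum_of_summable_integral_norm (fun i ↦ (hF i).1) hsum, ?_⟩
  have h := hasSum_integral_of_summable_integral_norm (fun i ↦ (hF i).1) hsum
  simp only [fun i ↦ (hF i).2] at h
  exact h.unique hc

end HasLaplace

lemma hasLaplace_exp {a s : ℂ} (h : a.re < s.re) :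
    HasLaplace (fun u ↦ cexp (a * u)) s (1 / (s - a)) := by
  have hre : (a - s).re < 0 := by simpa using h
  have he (u : ℝ) : cexp (a * u) * cexp (-s * u) = cexp ((a - s) * u) := by
    rw [← Complex.exp_add]
    congr 1
    ring
  simp only [HasLaplace, he]
  refine ⟨integrableOn_exp_mul_complex_Ioi hre 0, ?_⟩
  rw [integral_exp_mul_complex_Ioi hre, ofReal_zero, mul_zero, Complex.exp_zero, ← neg_sub s a,
    neg_div_neg_eq]

lemma hasLaplace_const {s : ℂ} (hs : 0 < s.re) (c : ℂ) : HasLaplace (fun _ ↦ c) s (c / s) := by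
  simpa [div_eq_mul_inv] using (hasLaplace_exp (a := 0) hs).const_mul c

lemma hasLaplace_ofReal {s : ℂ} (hs : 0 < s.re) : HasLaplace (fun u ↦ (u : ℂ)) s (1 / s ^ 2) := by
  simpa [sq, div_eq_mul_inv] using (hasLaplace_const hs 1).primitive hs

lemma setIntegral_Ioi_indicator_Ici {E : Type*} [NormedAddCommGroup E] [NormedSpace ℝ E]
    {a b : ℝ} (hab : a ≤ b) (f : ℝ → E) :
    ∫ u in Ioi a, (Ici b).indicator f u = ∫ u in Ioi b, f u := by
  rw [setIntegral_indicator measurableSet_Ici]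
  refine setIntegral_congr_set ((ae_eq_set_inter .rfl Ioi_ae_eq_Ici.symm).trans (.of_eq ?_))
  exact inter_eq_right.2 (Ioi_subset_Ioi hab)

lemma hasLaplace_indicator_Ici {s : ℂ} (hs : 0 < s.re) {l : ℝ} (hl : 0 ≤ l) (c : ℂ) :
    HasLaplace ((Ici l).indicator fun _ ↦ c) s (c * cexp (-s * l) / s) := by
  have hre : (-s).re < 0 := by simpa using hs
  have hmul (u : ℝ) : (Ici l).indicator (fun _ ↦ c) u * cexp (-s * u) =
      (Ici l).indicator (fun u : ℝ ↦ c * cexp (-s * u)) u := by rw [indicator_mul_left]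
  simp only [HasLaplace, hmul]
  refine ⟨((integrableOn_exp_mul_complex_Ioi hre 0).const_mul c).indicator measurableSet_Ici, ?_⟩
  rw [setIntegral_Ioi_indicator_Ici hl, integral_const_mul, integral_exp_mul_complex_Ioi hre,
    neg_div_neg_eq, mul_div_assoc]

lemma integral_norm_indicator_Ici_mul_exp {s : ℂ} (hs : 0 < s.re) {l : ℝ} (hl : 0 ≤ l) (c : ℂ) :
    ∫ u in Ioi (0 : ℝ), ‖(Ici l).indicator (fun _ ↦ c) u * cexp (-s * u)‖ =
      ‖c * cexp (-s * l)‖ / s.re := by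
  have hmul (u : ℝ) : ‖(Ici l).indicator (fun _ ↦ c) u * cexp (-s * u)‖ =
      (Ici l).indicator (fun u : ℝ ↦ ‖c‖ * Real.exp (-s.re * u)) u := by
    rw [indicator_mul_left, norm_mul, norm_indicator_eq_indicator_norm, Complex.norm_exp]
    simp
  simp only [hmul]
  rw [setIntegral_Ioi_indicator_Ici hl, integral_const_mul,
    integral_exp_mul_Ioi (by simpa using hs), neg_div_neg_eq, norm_mul, Complex.norm_exp,
    mul_div_assoc]
  simp

lemma log_le_iff_mem_Icc_floor_exp {n : ℕ} (hn : n ≠ 0) {u : ℝ} :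
    Real.log n ≤ u ↔ n ∈ Finset.Icc 1 ⌊Real.exp u⌋₊ := by
  rw [Real.log_le_iff_le_exp (by positivity), Finset.mem_Icc, Nat.le_floor_iff (by positivity)]
  exact (and_iff_right (Nat.one_le_iff_ne_zero.2 hn)).symm

lemma sum_Icc_floor_exp_eq_tsum (c : ℕ → ℂ) (u : ℝ) :
    ∑ n ∈ Finset.Icc 1 ⌊Real.exp u⌋₊, c n =
      ∑' n : ℕ, (Ici (Real.log n)).indicator (fun _ ↦ if n = 0 then 0 else c n) u := by
  rw [tsum_eq_sum (s := Finset.Icc 1 ⌊Real.exp u⌋₊) fun n hn ↦ ?_]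
  · refine Finset.sum_congr rfl fun n hn ↦ ?_
    have hn₀ : n ≠ 0 := Nat.one_le_iff_ne_zero.1 (Finset.mem_Icc.1 hn).1
    rw [indicator_of_mem (mem_Ici.2 ((log_le_iff_mem_Icc_floor_exp hn₀).2 hn)), if_neg hn₀]
  · rcases eq_or_ne n 0 with rfl | hn₀
    · simp
    · exact indicator_of_notMem (fun h ↦ hn ((log_le_iff_mem_Icc_floor_exp hn₀).1 h)) _

lemma natCast_cpow_neg_eq_exp {n : ℕ} (hn : n ≠ 0) (s : ℂ) :
    (n : ℂ) ^ (-s) = cexp (-s * Real.log n) := by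
  rw [cpow_def_of_ne_zero (by exact_mod_cast hn), natCast_log, mul_comm]

lemma hasLaplace_sum_Icc_floor_exp {c : ℕ → ℂ} {s : ℂ} (hs : 0 < s.re)
    (hc : LSeriesSummable c s) :
    HasLaplace (fun u ↦ ∑ n ∈ Finset.Icc 1 ⌊Real.exp u⌋₊, c n) s (LSeries c s / s) := by
  simp_rw [sum_Icc_floor_exp_eq_tsum]
  have hterm (n : ℕ) :
      (if n = 0 then 0 else c n) * cexp (-s * Real.log n) = LSeries.term c s n := by
    rcases eq_or_ne n 0 with rfl | hn
    · simp
    · rw [if_neg hn, ← natCast_cpow_neg_eq_exp hn, LSeries.term_of_ne_zero hn, cpow_neg,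
        div_eq_mul_inv]
  have hF (n : ℕ) := hasLaplace_indicator_Ici hs (Real.log_natCast_nonneg n)
    (if n = 0 then 0 else c n)
  simp only [hterm] at hF
  refine HasLaplace.tsum hF (hc.hasSum.div_const s) (?_)
  simpa only [integral_norm_indicator_Ici_mul_exp hs (Real.log_natCast_nonneg _), hterm]
    using hc.norm.div_const s.re

/-- By Fourier inversion on the line `re s = 1`. -/
lemma eq_zero_of_laplace_eq_zero {g : ℝ → ℂ} (hg : Continuous fun u ↦ g (max u 0))
    (hg₀ : g 0 = 0) (hL : ∀ s : ℂ, s.re = 1 → HasLaplace g s 0) {u : ℝ} (hu : 0 ≤ u) :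
    g u = 0 := by
  set f : ℝ → ℂ := fun u ↦ g (max u 0) * cexp (-u) with hf
  have hsupp : ∀ u ∉ Ioi (0 : ℝ), f u = 0 := fun u hu ↦ by
    simp [hf, max_eq_right (notMem_Ioi.1 hu), hg₀]
  have heq (u : ℝ) (hu : u ∈ Ioi 0) : f u = g u * cexp (-u) := by
    simp only [hf, max_eq_left (mem_Ioi.1 hu).le]
  have hfint : Integrable f := by
    rw [← integrableOn_univ]
    refine (IntegrableOn.congr_fun (hL 1 one_re).1 (fun u hu ↦ ?_)
      measurableSet_Ioi).of_forall_sdiff_eq_zero MeasurableSet.univ fun u hu ↦ hsupp u hu.2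
    rw [heq u hu, neg_one_mul]
  have hF : 𝓕 f = 0 := by
    ext τ
    rw [Real.fourier_real_eq_integral_exp_smul, Pi.zero_apply,
      ← (hL (1 + 2 * Real.pi * τ * I) (by simp)).2,
      ← setIntegral_eq_integral_of_forall_compl_eq_zero (s := Ioi 0)
        fun u hu ↦ by rw [hsupp u hu, smul_zero]]
    refine setIntegral_congr_fun measurableSet_Ioi fun u hu ↦ ?_
    simp only [heq u hu, smul_eq_mul]
    rw [mul_comm, mul_assoc, ← Complex.exp_add]
    congr 2
    push_cast
    ring
  have hinv : 𝓕⁻ (𝓕 f) = f := Continuous.fourierInv_fourier_eq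
    (hg.mul (by fun_prop)) hfint (by rw [hF]; exact integrable_zero _ _ _)
  have hfu : f u = 0 := by
    rw [← hinv, hF, Real.fourierInv_eq]
    simp
  simpa [hf, max_eq_left hu] using hfu

lemma hasLaplace_log {s : ℝ} (hs : 0 < s) : HasLaplace (fun u ↦ (Real.log u : ℂ)) s
    (-(Real.eulerMascheroniConstant + Real.log s) / s) := by
  have hcont : Continuous fun t : ℝ ↦ cexp (-s * t) := by fun_prop
  have htop : (fun t : ℝ ↦ cexp (-s * t)) =O[atTop] (· ^ (-2 : ℝ)) := by
    refine .of_norm_left ?_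
    simpa [norm_exp] using (isLittleO_exp_neg_mul_rpow_atTop hs (-2)).isBigO
  have hbot : (fun t : ℝ ↦ cexp (-s * t)) =O[𝓝[>] 0] (· ^ (-0 : ℝ)) := by
    simpa using ((hcont.tendsto 0).isBigO_one ℝ).mono nhdsWithin_le_nhds
  obtain ⟨hint, hderiv⟩ := mellin_hasDerivAt_of_isBigO_rpow (s := 1)
    (hcont.locallyIntegrable.locallyIntegrableOn _) htop (by simp) hbot (by simp)
  have hmellin : ∀ᶠ z in 𝓝 (1 : ℂ),
      mellin (fun t ↦ cexp (-s * t)) z = (1 / s) ^ z * Gamma z := by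
    filter_upwards [(isOpen_lt continuous_const continuous_re).mem_nhds (by simp : (0 : ℝ) < re 1)]
      with z hz
    simpa [mellin] using integral_cpow_mul_exp_neg_mul_Ioi hz hs
  have hcpow := (hasDerivAt_id (1 : ℂ)).const_cpow (c := 1 / s) (.inl (by simpa using hs.ne'))
  have hlog : log (s : ℂ)⁻¹ = -Real.log s := by
    rw [← ofReal_inv, ← ofReal_log (inv_pos.2 hs).le, Real.log_inv, ofReal_neg]
  have heq := hderiv.unique ((hcpow.mul hasDerivAt_Gamma_one).congr_of_eventuallyEq hmellin)
  refine ⟨by simpa [MellinConvergent] using hint, ?_⟩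
  simp only [mellin, sub_self, cpow_zero, one_smul, real_smul] at heq
  rw [heq]
  simp only [id, one_div, cpow_one, Gamma_one, hlog]
  ring

lemma HasLaplace.norm_le {f : ℝ → ℂ} {s a b : ℂ} {s₀ U ε : ℝ} (h₀ : HasLaplace f s₀ b)
    (h : HasLaplace f s a) (hs : 0 < s.re) (hss₀ : s.re ≤ s₀) (hε : ∀ u, U ≤ u → ‖f u‖ ≤ ε) :
    ‖a‖ ≤ Real.exp (s₀ * U) * (∫ u in Ioi (0 : ℝ), ‖f u * cexp (-s₀ * u)‖) + ε / s.re := by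
  have hre : -s.re < 0 := by simpa using hs
  have hε₀ : 0 ≤ ε := (norm_nonneg _).trans (hε U le_rfl)
  have hexp : IntegrableOn (fun u ↦ ε * Real.exp (-s.re * u)) (Ioi 0) :=
    (integrableOn_exp_mul_Ioi hre 0).const_mul ε
  have hf : IntegrableOn (fun u : ℝ ↦ Real.exp (s₀ * U) * ‖f u * cexp (-s₀ * u)‖) (Ioi 0) :=
    h₀.1.norm.const_mul _
  have hbound (u : ℝ) (hu : 0 < u) : ‖f u * cexp (-s * u)‖ ≤
      Real.exp (s₀ * U) * ‖f u * cexp (-s₀ * u)‖ + ε * Real.exp (-s.re * u) := by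
    simp only [norm_mul, norm_exp, re_mul_ofReal, neg_re, ofReal_re]
    rcases le_total U u with hUu | huU
    · exact (mul_le_mul_of_nonneg_right (hε u hUu) (Real.exp_pos _).le).trans
        (le_add_of_nonneg_left (by positivity))
    · refine le_add_of_le_of_nonneg ?_ (by positivity)
      rw [mul_left_comm, ← Real.exp_add]
      gcongr
      nlinarith
  calc ‖a‖ = ‖∫ u in Ioi (0 : ℝ), f u * cexp (-s * u)‖ := by rw [h.2]
    _ ≤ ∫ u in Ioi (0 : ℝ), (Real.exp (s₀ * U) * ‖f u * cexp (-s₀ * u)‖ +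
        ε * Real.exp (-s.re * u)) :=
      norm_integral_le_of_norm_le (hf.add hexp)
        ((ae_restrict_iff' measurableSet_Ioi).2 (.of_forall hbound))
    _ = _ := by
      rw [integral_add hf hexp, integral_const_mul, integral_const_mul,
        integral_exp_mul_Ioi hre]
      simp [div_eq_mul_inv]

lemma tendsto_mul_laplace {f : ℝ → ℂ} {L : ℝ → ℂ} {c : ℂ}
    (hL : ∀ s : ℝ, 0 < s → HasLaplace f s (L s)) (hf : Tendsto f atTop (𝓝 c)) :
    Tendsto (fun s : ℝ ↦ s * L s) (𝓝[>] 0) (𝓝 c) := by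
  wlog hc : c = 0 generalizing f L c
  · have hsub := this (fun s hs ↦ (hL s hs).sub (hasLaplace_const (by simpa) c))
      (by simpa using hf.sub_const c) rfl
    refine tendsto_sub_nhds_zero_iff.1 (hsub.congr' ?_)
    filter_upwards [self_mem_nhdsWithin] with s hs
    rw [mul_sub, mul_div_cancel₀ _ (ofReal_ne_zero.2 (ne_of_gt hs))]
  subst hc
  rw [Metric.tendsto_nhds]
  intro ε hε
  have hsmall : ∀ᶠ u in atTop, ‖f u‖ ≤ ε / 2 :=
    hf.norm.eventually_le_const (by simpa using half_pos hε)
  obtain ⟨U, hfU⟩ := eventually_atTop.1 hsmall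
  set K := Real.exp (1 * U) * ∫ u in Ioi (0 : ℝ), ‖f u * cexp (-(1 : ℝ) * u)‖
  have hK : Tendsto (fun s : ℝ ↦ s * K) (𝓝[>] 0) (𝓝 0) := by
    simpa using (tendsto_nhdsWithin_of_tendsto_nhds (continuous_mul_const K).continuousAt.tendsto :
      Tendsto (· * K) (𝓝[>] 0) _)
  filter_upwards [hK.eventually_lt_const (half_pos hε), Ioc_mem_nhdsGT one_pos] with s hsK hs
  have hle := (hL 1 one_pos).norm_le (hL s hs.1) hs.1 hs.2 hfU
  calc dist (s * L s) 0 = s * ‖L s‖ := by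
        rw [dist_zero_right, norm_mul, norm_real, Real.norm_of_nonneg hs.1.le]
    _ ≤ s * (K + ε / 2 / s) := mul_le_mul_of_nonneg_left hle hs.1.le
    _ = s * K + ε / 2 := by rw [mul_add, mul_div_cancel₀ _ hs.1.ne']
    _ < ε := by linarith

end LaplaceTransform

section ExplicitFormula

open ArithmeticFunction Asymptotics Complex MeasureTheory Set Topology
open scoped LSeries.notation

/-- The error term `∑_{n ≤ e^v} Λ(n)/n - v + γ` of Mertens' first theorem on a logarithmic
scale. -/
noncomputable def mangoldtErr (v : ℝ) : ℝ :=
  ∑ n ∈ Finset.Icc 1 ⌊Real.exp v⌋₊, vonMangoldt n / n - v + Real.eulerMascheroniConstant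

/-- The sum `∑ m(ρ) e^{ρu} / ρ²` over the zeros `ρ` of `s ζ(1 + s)`, which is the remainder in the
explicit formula for `∫ mangoldtErr`. -/
noncomputable def zeroTail (u : ℝ) : ℂ :=
  ∑' ρ : ShiftedZetaZero, zeroMult ρ / (ρ : ℂ) ^ 2 * cexp (ρ * u)

/-- A modulus of continuity for the functions `v ↦ e^{u/2} zeroTail (u + v)`, uniform in `u`. -/
noncomputable def zeroModulus (h : ℝ) : ℝ :=
  ∑' ρ : ShiftedZetaZero, zeroMult ρ / ‖(ρ : ℂ)‖ ^ 2 * min 2 (2 * ‖(ρ : ℂ)‖ * |h|)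

instance : Countable ShiftedZetaZero := by
  have h₀ : shiftedZeta 0 ≠ 0 := shiftedZeta_ne_zero_of_re_nonneg zero_re.ge
  obtain ⟨t, ht, -⟩ := tendsto_sum_zeroMult_mul h₀ h₀
  refine countable_univ_iff.1 ((countable_iUnion fun N ↦ (t N).countable_toSet).mono
    fun ρ _ ↦ mem_iUnion.2 ?_)
  exact (ht.eventually_ge_atTop {ρ}).exists.imp fun N hN ↦ hN (Finset.mem_singleton_self ρ)

lemma zeroMult_div_normSq_nonneg (ρ : ShiftedZetaZero) : 0 ≤ zeroMult ρ / ‖(ρ : ℂ)‖ ^ 2 :=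
  div_nonneg (zeroMult_nonneg ρ) (sq_nonneg _)

lemma norm_zeroMult_div_sq (ρ : ShiftedZetaZero) :
    ‖(zeroMult ρ / (ρ : ℂ) ^ 2 : ℂ)‖ = zeroMult ρ / ‖(ρ : ℂ)‖ ^ 2 := by
  rw [norm_div, norm_pow, norm_real, Real.norm_of_nonneg (zeroMult_nonneg ρ)]

lemma norm_exp_zero_mul_le (hRH : RiemannHypothesis) (ρ : ShiftedZetaZero) {u : ℝ} (hu : 0 ≤ u) :
    ‖cexp (ρ * u)‖ ≤ Real.exp (-u / 2) := by
  rw [Complex.norm_exp, Real.exp_le_exp, re_mul_ofReal]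
  nlinarith [ρ.re_le hRH]

lemma norm_exp_zero_mul_le_one (hRH : RiemannHypothesis) (ρ : ShiftedZetaZero) {u : ℝ}
    (hu : 0 ≤ u) : ‖cexp (ρ * u)‖ ≤ 1 :=
  (norm_exp_zero_mul_le hRH ρ hu).trans (Real.exp_le_one_iff.2 (by linarith))

lemma norm_zeroTail_term_le (hRH : RiemannHypothesis) (ρ : ShiftedZetaZero) {u : ℝ} (hu : 0 ≤ u) :
    ‖zeroMult ρ / (ρ : ℂ) ^ 2 * cexp (ρ * u)‖ ≤ zeroMult ρ / ‖(ρ : ℂ)‖ ^ 2 := by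
  rw [norm_mul, norm_zeroMult_div_sq]
  exact mul_le_of_le_one_right (zeroMult_div_normSq_nonneg ρ) (norm_exp_zero_mul_le_one hRH ρ hu)

lemma summable_zeroTail (hRH : RiemannHypothesis) {u : ℝ} (hu : 0 ≤ u) :
    Summable fun ρ : ShiftedZetaZero ↦ zeroMult ρ / (ρ : ℂ) ^ 2 * cexp (ρ * u) :=
  .of_norm_bounded (summable_zeroMult_div_normSq hRH) fun ρ ↦ norm_zeroTail_term_le hRH ρ hu

lemma continuous_zeroTail_max (hRH : RiemannHypothesis) :
    Continuous fun u : ℝ ↦ zeroTail (max u 0) :=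
  continuous_tsum (fun _ ↦ by fun_prop) (summable_zeroMult_div_normSq hRH)
    fun ρ u ↦ norm_zeroTail_term_le hRH ρ (le_max_right u 0)

theorem hasLaplace_zeroTail_zero_sub_zeroTail (hRH : RiemannHypothesis) {s : ℂ} (hs : 0 < s.re) :
    HasLaplace (fun u ↦ zeroTail 0 - zeroTail u) s
      ((Real.eulerMascheroniConstant - logDeriv shiftedZeta s) / s / s) := by
  have hs₀ : s ≠ 0 := ne_zero_of_re_pos hs
  set F : ShiftedZetaZero → ℝ → ℂ :=
    fun ρ u ↦ zeroMult ρ / (ρ : ℂ) ^ 2 - zeroMult ρ / (ρ : ℂ) ^ 2 * cexp (ρ * u)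
  have hF (ρ : ShiftedZetaZero) : HasLaplace (F ρ) s (zeroMult ρ / (-ρ * (s - ρ)) / s) := by
    have hρ : (ρ : ℂ).re < s.re := by linarith [ρ.re_le hRH]
    have hρ₀ := ρ.ne_zero
    have hsρ : s - ρ ≠ 0 := sub_ne_zero.2 fun h ↦ hρ.ne (congrArg re h).symm
    convert (hasLaplace_const hs (zeroMult ρ / (ρ : ℂ) ^ 2)).sub
      ((hasLaplace_exp hρ).const_mul (zeroMult ρ / (ρ : ℂ) ^ 2)) using 1
    field_simp
    ring
  have hbound (ρ : ShiftedZetaZero) (u : ℝ) (hu : u > 0) :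
      ‖F ρ u‖ ≤ zeroMult ρ / ‖(ρ : ℂ)‖ ^ 2 + zeroMult ρ / ‖(ρ : ℂ)‖ ^ 2 :=
    (norm_sub_le _ _).trans
      (add_le_add (norm_zeroMult_div_sq ρ).le (norm_zeroTail_term_le hRH ρ hu.le))
  have hnorm := summable_zeroMult_div_normSq hRH
  refine (HasLaplace.tsum hF ((hasSum_zeroMult_div_mul_sub hRH hs).div_const s)
    (.of_nonneg_of_le (fun ρ ↦ integral_nonneg fun u ↦ norm_nonneg _)
      (fun ρ ↦ (hF ρ).integral_norm_le hs (hbound ρ))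
      ((hnorm.add hnorm).div_const s.re))).congr fun u hu ↦ ?_
  have h₀ := summable_zeroTail hRH le_rfl
  simp only [ofReal_zero, mul_zero, Complex.exp_zero, mul_one] at h₀
  simp only [F, zeroTail, ofReal_zero, mul_zero, Complex.exp_zero, mul_one]
  exact h₀.tsum_sub (summable_zeroTail hRH (le_of_lt hu))

lemma LSeries_div_natCast_term (f : ℕ → ℂ) (s : ℂ) (n : ℕ) :
    LSeries.term (fun n ↦ f n / n) s n = LSeries.term f (1 + s) n := by
  rcases eq_or_ne n 0 with rfl | hn
  · simp
  · rw [LSeries.term_of_ne_zero hn, LSeries.term_of_ne_zero hn,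
      cpow_add _ _ (by exact_mod_cast hn), cpow_one, div_div]

lemma hasLaplace_mangoldtErr {s : ℂ} (hs : 0 < s.re) :
    HasLaplace (fun u ↦ mangoldtErr u) s
      ((Real.eulerMascheroniConstant - logDeriv shiftedZeta s) / s) := by
  have hs₀ : s ≠ 0 := ne_zero_of_re_pos hs
  have hs₁ : 1 < (1 + s).re := by simpa using hs
  have hterm : LSeries.term (fun n ↦ (vonMangoldt n : ℂ) / n) s =
      LSeries.term (↗vonMangoldt) (1 + s) := funext (LSeries_div_natCast_term _ s)
  have hsum : LSeriesSummable (fun n ↦ (vonMangoldt n : ℂ) / n) s := by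
    rw [LSeriesSummable, hterm]
    exact LSeriesSummable_vonMangoldt hs₁
  have hL : LSeries (fun n ↦ (vonMangoldt n : ℂ) / n) s = -logDeriv riemannZeta (1 + s) := by
    rw [LSeries, hterm, ← LSeries, LSeries_vonMangoldt_eq_deriv_riemannZeta_div hs₁, neg_div,
      logDeriv_apply]
  have h := ((hasLaplace_sum_Icc_floor_exp hs hsum).sub (hasLaplace_ofReal hs)).add
    (hasLaplace_const hs Real.eulerMascheroniConstant)
  rw [hL] at h
  rw [logDeriv_shiftedZeta hs₀ (riemannZeta_ne_zero_of_one_le_re hs₁.le)]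
  convert h using 1
  · ext u
    simp [mangoldtErr]
  · field_simp
    ring

lemma monotone_sum_Icc_floor_exp {c : ℕ → ℝ} (hc : ∀ n, 0 ≤ c n) :
    Monotone fun v : ℝ ↦ ∑ n ∈ Finset.Icc 1 ⌊Real.exp v⌋₊, c n := fun _ _ h ↦
  Finset.sum_le_sum_of_subset_of_nonneg
    (Finset.Icc_subset_Icc_right (Nat.floor_mono (Real.exp_le_exp.2 h))) fun n _ _ ↦ hc n

lemma monotone_mangoldtErr_add_id : Monotone fun v ↦ mangoldtErr v + v := by
  have h : (fun v ↦ mangoldtErr v + v) = fun v ↦ ∑ n ∈ Finset.Icc 1 ⌊Real.exp v⌋₊,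
      vonMangoldt n / n + Real.eulerMascheroniConstant := by
    ext v
    rw [mangoldtErr]
    ring
  rw [h]
  exact (monotone_sum_Icc_floor_exp fun n ↦
    div_nonneg vonMangoldt_nonneg n.cast_nonneg).add_const _

lemma intervalIntegrable_mangoldtErr (a b : ℝ) : IntervalIntegrable mangoldtErr volume a b := by
  simpa using monotone_mangoldtErr_add_id.intervalIntegrable.sub
    (intervalIntegral.intervalIntegrable_id (a := a) (b := b))

theorem integral_mangoldtErr_eq_zeroTail (hRH : RiemannHypothesis) {u w : ℝ} (hu : 0 ≤ u)
    (hw : 0 ≤ w) : ∫ v in u..w, mangoldtErr v = (zeroTail u).re - (zeroTail w).re := by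
  have hzero {u : ℝ} (hu : 0 ≤ u) :
      (∫ v in 0..u, (mangoldtErr v : ℂ)) - (zeroTail 0 - zeroTail u) = 0 := by
    refine eq_zero_of_laplace_eq_zero
      (g := fun u ↦ (∫ v in 0..u, (mangoldtErr v : ℂ)) - (zeroTail 0 - zeroTail u))
      ?_ (by simp) (fun s hs ↦ ?_) hu
    · refine .sub (.comp (g := fun w ↦ ∫ v in 0..w, (mangoldtErr v : ℂ)) ?_ (by fun_prop))
        (continuous_const.sub (continuous_zeroTail_max hRH))
      exact intervalIntegral.continuous_primitive (fun a b ↦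
        (intervalIntegrable_mangoldtErr a b).imp .ofReal .ofReal) 0
    · have hs : 0 < s.re := hs ▸ one_pos
      simpa using ((hasLaplace_mangoldtErr hs).primitive hs).sub
        (hasLaplace_zeroTail_zero_sub_zeroTail hRH hs)
  have hreal {u : ℝ} (hu : 0 ≤ u) :
      ∫ v in 0..u, mangoldtErr v = (zeroTail 0).re - (zeroTail u).re := by
    have h := congrArg re (sub_eq_zero.1 (hzero hu))
    rwa [intervalIntegral.integral_ofReal, ofReal_re, sub_re] at h
  rw [← intervalIntegral.integral_interval_sub_left (intervalIntegrable_mangoldtErr 0 w)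
    (intervalIntegrable_mangoldtErr 0 u), hreal hw, hreal hu, sub_sub_sub_cancel_left]

lemma norm_zeroTail_le (hRH : RiemannHypothesis) {u : ℝ} (hu : 0 ≤ u) :
    ‖zeroTail u‖ ≤
      (∑' ρ, criticalZeros.indicator (fun ρ ↦ zeroMult ρ / ‖(ρ : ℂ)‖ ^ 2) ρ) * Real.exp (-u / 2) +
      (∑' ρ : ShiftedZetaZero, zeroMult ρ / ‖(ρ : ℂ)‖ ^ 2) * Real.exp (-3 * u) := by
  have hsum := summable_zeroMult_div_normSq hRH
  refine tsum_of_norm_bounded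
    (((hsum.indicator criticalZeros).hasSum.mul_right (Real.exp (-u / 2))).add
      (hsum.hasSum.mul_right (Real.exp (-3 * u)))) fun ρ ↦ ?_
  have hw := zeroMult_div_normSq_nonneg ρ
  rw [norm_mul, norm_zeroMult_div_sq]
  by_cases hρ : ρ ∈ criticalZeros
  · rw [indicator_of_mem hρ]
    have := mul_le_mul_of_nonneg_left (norm_exp_zero_mul_le hRH ρ hu) hw
    have := mul_nonneg hw (Real.exp_nonneg (-3 * u))
    linarith
  · rw [indicator_of_notMem hρ, zero_mul, zero_add, Complex.norm_exp, re_mul_ofReal]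
    gcongr
    exact re_le_of_mem_criticalZeros_compl hRH hρ

lemma eventually_abs_zeroTail_re_le (hRH : RiemannHypothesis) :
    ∀ᶠ u : ℝ in atTop, |(zeroTail u).re| ≤ 0.0499 * Real.exp (-u / 2) := by
  set C := ∑' ρ : ShiftedZetaZero, zeroMult ρ / ‖(ρ : ℂ)‖ ^ 2
  have hlim : Tendsto (fun u : ℝ ↦ C * Real.exp (-(5 / 2 * u))) atTop (𝓝 0) := by
    simpa using (Real.tendsto_exp_neg_atTop_nhds_zero.comp
      (tendsto_id.const_mul_atTop (by norm_num : (0 : ℝ) < 5 / 2))).const_mul C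
  filter_upwards [hlim.eventually_le_const (sub_pos.2 (tsum_indicator_criticalZeros_lt hRH)),
    eventually_ge_atTop 0] with u hCu hu
  refine (abs_re_le_norm _).trans ((norm_zeroTail_le hRH hu).trans ?_)
  have hexp : Real.exp (-3 * u) = Real.exp (-(5 / 2 * u)) * Real.exp (-u / 2) := by
    rw [← Real.exp_add]
    ring_nf
  rw [hexp, ← mul_assoc, ← add_mul]
  gcongr
  linarith

lemma zeroModulus_term_nonneg (h : ℝ) (ρ : ShiftedZetaZero) :
    0 ≤ zeroMult ρ / ‖(ρ : ℂ)‖ ^ 2 * min 2 (2 * ‖(ρ : ℂ)‖ * |h|) :=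
  mul_nonneg (zeroMult_div_normSq_nonneg ρ) (le_min zero_le_two (by positivity))

lemma zeroModulus_term_le (h : ℝ) (ρ : ShiftedZetaZero) :
    zeroMult ρ / ‖(ρ : ℂ)‖ ^ 2 * min 2 (2 * ‖(ρ : ℂ)‖ * |h|) ≤
      zeroMult ρ / ‖(ρ : ℂ)‖ ^ 2 * 2 :=
  mul_le_mul_of_nonneg_left (min_le_left _ _) (zeroMult_div_normSq_nonneg ρ)

lemma zeroModulus_nonneg (h : ℝ) : 0 ≤ zeroModulus h := tsum_nonneg (zeroModulus_term_nonneg h)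

lemma tendsto_zeroModulus (hRH : RiemannHypothesis) : Tendsto zeroModulus (𝓝 0) (𝓝 0) := by
  rw [← tsum_zero (α := ℝ) (β := ShiftedZetaZero)]
  refine tendsto_tsum_of_dominated_convergence
    ((summable_zeroMult_div_normSq hRH).mul_right 2) (fun ρ ↦ ?_) (.of_forall fun h ρ ↦ ?_)
  · have hcont : Continuous fun h : ℝ ↦
        zeroMult ρ / ‖(ρ : ℂ)‖ ^ 2 * min 2 (2 * ‖(ρ : ℂ)‖ * |h|) := by fun_prop
    simpa using hcont.tendsto 0
  · rw [Real.norm_of_nonneg (zeroModulus_term_nonneg h ρ)]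
    exact zeroModulus_term_le h ρ

lemma norm_one_sub_exp_le {z : ℂ} (hz : z.re ≤ 0) : ‖1 - cexp z‖ ≤ min 2 (2 * ‖z‖) := by
  have hexp : ‖cexp z‖ ≤ 1 := by rwa [Complex.norm_exp, Real.exp_le_one_iff]
  have htwo : ‖1 - cexp z‖ ≤ 2 := by linarith [norm_sub_le 1 (cexp z), norm_one (α := ℂ)]
  refine le_min htwo ?_
  rcases le_total ‖z‖ 1 with h | h
  · exact norm_sub_rev (cexp z) 1 ▸ norm_exp_sub_one_le h
  · linarith

lemma abs_integral_mangoldtErr_le (hRH : RiemannHypothesis) {u h : ℝ} (hu : 0 ≤ u) (hh : 0 ≤ h) :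
    |∫ v in u..u + h, mangoldtErr v| ≤ Real.exp (-u / 2) * zeroModulus h := by
  have huh := add_nonneg hu hh
  rw [integral_mangoldtErr_eq_zeroTail hRH hu huh, ← sub_re]
  refine (abs_re_le_norm _).trans ?_
  have hsum : Summable fun ρ : ShiftedZetaZero ↦
      zeroMult ρ / ‖(ρ : ℂ)‖ ^ 2 * min 2 (2 * ‖(ρ : ℂ)‖ * |h|) :=
    .of_nonneg_of_le (zeroModulus_term_nonneg h) (zeroModulus_term_le h)
      ((summable_zeroMult_div_normSq hRH).mul_right 2)
  rw [zeroTail, zeroTail, ← (summable_zeroTail hRH hu).tsum_sub (summable_zeroTail hRH huh)]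
  refine tsum_of_norm_bounded (hsum.hasSum.mul_left _) fun ρ ↦ ?_
  have hfactor : zeroMult ρ / (ρ : ℂ) ^ 2 * cexp (ρ * u) -
      zeroMult ρ / (ρ : ℂ) ^ 2 * cexp (ρ * (u + h : ℝ)) =
      cexp (ρ * u) * (zeroMult ρ / (ρ : ℂ) ^ 2 * (1 - cexp (ρ * h))) := by
    push_cast
    rw [mul_add, Complex.exp_add]
    ring
  have hincr : ‖1 - cexp (ρ * h)‖ ≤ min 2 (2 * ‖(ρ : ℂ)‖ * |h|) := by
    have hre : ((ρ : ℂ) * h).re ≤ 0 := by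
      rw [re_mul_ofReal]
      exact mul_nonpos_of_nonpos_of_nonneg (by linarith [ρ.re_le hRH]) hh
    simpa [mul_assoc] using norm_one_sub_exp_le hre
  rw [hfactor, norm_mul, norm_mul, norm_zeroMult_div_sq]
  have hw := zeroMult_div_normSq_nonneg ρ
  gcongr
  exact norm_exp_zero_mul_le hRH ρ hu

/-- The Tauberian step: adding `id` makes `f` monotone, so a large value of `f` persists over an
interval of length `h` on one of the two sides. -/
lemma abs_le_of_monotone_add_id {f : ℝ → ℝ} (hf : Monotone fun v ↦ f v + v)
    (hint : ∀ a b, IntervalIntegrable f volume a b) {u h B : ℝ} (hh : 0 < h)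
    (hright : |∫ v in u..u + h, f v| ≤ B) (hleft : |∫ v in u - h..u, f v| ≤ B) :
    |f u| ≤ B / h + h := by
  have hupper : ∫ _ in u..u + h, (f u - h) ≤ ∫ v in u..u + h, f v :=
    intervalIntegral.integral_mono_on (by linarith) intervalIntegrable_const (hint _ _)
      fun v hv ↦ by linarith [hf hv.1, hv.2]
  have hlower : ∫ v in u - h..u, f v ≤ ∫ _ in u - h..u, (f u + h) :=
    intervalIntegral.integral_mono_on (by linarith) (hint _ _) intervalIntegrable_const
      fun v hv ↦ by linarith [hf hv.2, hv.1]
  simp only [intervalIntegral.integral_const, smul_eq_mul, add_sub_cancel_left,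
    sub_sub_cancel] at hupper hlower
  rw [← sub_le_iff_le_add, le_div_iff₀ hh]
  rcases abs_cases (f u) with ⟨h', -⟩ | ⟨h', -⟩ <;> rw [h'] <;>
    linarith [abs_le.1 hright, abs_le.1 hleft]

lemma abs_mangoldtErr_le (hRH : RiemannHypothesis) {u h : ℝ} (hh : 0 < h) (hu : h ≤ u) :
    |mangoldtErr u| ≤ Real.exp (-(u - h) / 2) * zeroModulus h / h + h := by
  refine abs_le_of_monotone_add_id monotone_mangoldtErr_add_id intervalIntegrable_mangoldtErr hh
    ?_ ?_
  · refine (abs_integral_mangoldtErr_le hRH (hh.le.trans hu) hh.le).trans ?_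
    have := zeroModulus_nonneg h
    gcongr
    linarith
  · simpa using abs_integral_mangoldtErr_le hRH (sub_nonneg.2 hu) hh.le

lemma tendsto_exp_neg_div_atTop {c : ℝ} (hc : 0 < c) :
    Tendsto (fun u : ℝ ↦ Real.exp (-u / c)) atTop (𝓝 0) := by
  simpa only [Function.comp_def, id, neg_div] using
    Real.tendsto_exp_neg_atTop_nhds_zero.comp (tendsto_id.atTop_div_const hc)

/-- `h = (c / 2) e^{-u/4}` balances the two terms of `abs_mangoldtErr_le`. -/
theorem mangoldtErr_isLittleO (hRH : RiemannHypothesis) :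
    mangoldtErr =o[atTop] fun u : ℝ ↦ Real.exp (-u / 4) := by
  rw [isLittleO_iff]
  intro c hc
  have hlim : Tendsto (fun u : ℝ ↦ c / 2 * Real.exp (-u / 4)) atTop (𝓝 0) := by
    simpa using (tendsto_exp_neg_div_atTop four_pos).const_mul (c / 2)
  filter_upwards [hlim.eventually_le_const one_pos, eventually_ge_atTop 1,
    ((tendsto_zeroModulus hRH).comp hlim).eventually_le_const
      (by positivity : 0 < c ^ 2 / 4 * Real.exp (-(1 / 2)))] with u hh₁ hu hmod
  set h := c / 2 * Real.exp (-u / 4) with hdef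
  have hh : 0 < h := by positivity
  have hexp : Real.exp (-(u - h) / 2) ≤ Real.exp (1 / 2) * Real.exp (-u / 4) ^ 2 := by
    rw [← Real.exp_nat_mul, ← Real.exp_add, Real.exp_le_exp]
    push_cast
    linarith
  have hprod : Real.exp (-(u - h) / 2) * zeroModulus h ≤ h * h :=
    calc _ ≤ Real.exp (1 / 2) * Real.exp (-u / 4) ^ 2 * (c ^ 2 / 4 * Real.exp (-(1 / 2))) :=
          mul_le_mul hexp hmod (zeroModulus_nonneg h) (by positivity)
      _ = h * h := by
          rw [hdef, Real.exp_neg (1 / 2)]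
          field_simp
          norm_num
  rw [Real.norm_eq_abs, Real.norm_of_nonneg (Real.exp_pos _).le]
  calc |mangoldtErr u| ≤ Real.exp (-(u - h) / 2) * zeroModulus h / h + h :=
        abs_mangoldtErr_le hRH hh (hh₁.trans hu)
    _ ≤ h + h := by grw [hprod, mul_div_cancel_right₀ h hh.ne']
    _ = c * Real.exp (-u / 4) := by rw [hdef]; ring

lemma tendsto_mangoldtErr (hRH : RiemannHypothesis) : Tendsto mangoldtErr atTop (𝓝 0) :=
  (mangoldtErr_isLittleO hRH).isBigO.trans_tendsto (tendsto_exp_neg_div_atTop four_pos)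

end ExplicitFormula

section Primes

open ArithmeticFunction Asymptotics MeasureTheory Set Topology

lemma sum_Icc_eq_add_sum_Ioc {M N : ℕ} (h : M ≤ N) (c : ℕ → ℝ) :
    ∑ n ∈ Finset.Icc 1 N, c n = ∑ n ∈ Finset.Icc 1 M, c n + ∑ n ∈ Finset.Ioc M N, c n :=
  (Finset.sum_Ioc_consecutive c M.zero_le h).symm

lemma sum_Ioc_floor_exp_mul {c : ℕ → ℝ} (hc : c 0 = 0) {f f' : ℝ → ℝ} {u w : ℝ} (huw : u ≤ w)
    (hf : ∀ v ∈ Icc u w, HasDerivAt f (f' v) v) (hf' : ContinuousOn f' (Icc u w)) :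
    ∑ n ∈ Finset.Ioc ⌊Real.exp u⌋₊ ⌊Real.exp w⌋₊, c n * f (Real.log n) =
      f w * ∑ n ∈ Finset.Icc 1 ⌊Real.exp w⌋₊, c n - f u * ∑ n ∈ Finset.Icc 1 ⌊Real.exp u⌋₊, c n -
        ∫ v in u..w, f' v * ∑ n ∈ Finset.Icc 1 ⌊Real.exp v⌋₊, c n := by
  have hexp : Real.exp u ≤ Real.exp w := Real.exp_le_exp.2 huw
  have hpos {t : ℝ} (ht : t ∈ Icc (Real.exp u) (Real.exp w)) : 0 < t :=
    (Real.exp_pos u).trans_le ht.1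
  have hlog {t : ℝ} (ht : t ∈ Icc (Real.exp u) (Real.exp w)) : Real.log t ∈ Icc u w :=
    ⟨(Real.le_log_iff_exp_le (hpos ht)).2 ht.1, (Real.log_le_iff_le_exp (hpos ht)).2 ht.2⟩
  have hderiv {t : ℝ} (ht : t ∈ Icc (Real.exp u) (Real.exp w)) :
      HasDerivAt (fun t ↦ f (Real.log t)) (f' (Real.log t) * t⁻¹) t :=
    (hf _ (hlog ht)).comp t (Real.hasDerivAt_log (hpos ht).ne')
  have hcont : ContinuousOn (deriv fun t ↦ f (Real.log t)) (Icc (Real.exp u) (Real.exp w)) := by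
    refine ContinuousOn.congr (.mul (hf'.comp ?_ fun t ↦ hlog) ?_) fun t ht ↦ (hderiv ht).deriv
    · exact continuousOn_id.log fun t ht ↦ (hpos ht).ne'
    · exact continuousOn_id.inv₀ fun t ht ↦ (hpos ht).ne'
  have hsum (N : ℕ) : ∑ n ∈ Finset.Icc 0 N, c n = ∑ n ∈ Finset.Icc 1 N, c n := by
    rw [← Finset.add_sum_Ioc_eq_sum_Icc N.zero_le, hc, zero_add]
    rfl
  have habel := sum_mul_eq_sub_sub_integral_mul c (Real.exp_pos u).le hexp
    (fun t ht ↦ (hderiv ht).differentiableAt) hcont.integrableOn_Icc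
  simp only [hsum, Real.log_exp] at habel
  simp only [mul_comm (c _), habel, sub_right_inj]
  rw [← integral_Icc_eq_integral_Ioc, intervalIntegral.integral_of_le huw,
    ← integral_Icc_eq_integral_Ioc, ← integral_Icc_deriv_smul_of_deriv_nonneg
    (by fun_prop) (fun v _ ↦ Real.hasDerivAt_exp v) (fun v _ ↦ (Real.exp_pos v).le) huw]
  refine setIntegral_congr_fun measurableSet_Icc fun v hv ↦ ?_
  simp only [(hderiv ⟨Real.exp_le_exp.2 hv.1, Real.exp_le_exp.2 hv.2⟩).deriv, Real.log_exp,
    smul_eq_mul]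
  field_simp

/-- The weight `log p / (p - 1)` on primes, as in the definition of `gammaP`. -/
noncomputable def primeWt (n : ℕ) : ℝ := if n.Prime then Real.log n / (n - 1) else 0

/-- The summatory function of `primeWt` on a logarithmic scale. -/
noncomputable def primeSum (v : ℝ) : ℝ := ∑ n ∈ Finset.Icc 1 ⌊Real.exp v⌋₊, primeWt n

/-- The error term `∑_{p ≤ e^v} log p / (p - 1) - v + γ`, the analogue of `mangoldtErr` for
primes. -/
noncomputable def primeErr (v : ℝ) : ℝ := primeSum v - v + Real.eulerMascheroniConstant

lemma primeWt_nonneg (n : ℕ) : 0 ≤ primeWt n := by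
  unfold primeWt
  split_ifs with hn
  · exact div_nonneg (Real.log_natCast_nonneg n) (sub_nonneg.2 (mod_cast hn.one_le))
  · exact le_rfl

lemma monotone_primeSum : Monotone primeSum := monotone_sum_Icc_floor_exp primeWt_nonneg

lemma intervalIntegrable_primeErr (a b : ℝ) : IntervalIntegrable primeErr volume a b :=
  (monotone_primeSum.intervalIntegrable.sub (continuous_id.intervalIntegrable a b)).add
    intervalIntegrable_const

lemma sum_Ioc_primeWt_mul {f f' G : ℝ → ℝ} {u w : ℝ} (huw : u ≤ w)
    (hG : ∀ v ∈ Icc u w, HasDerivAt G (f v) v) (hf : ∀ v ∈ Icc u w, HasDerivAt f (f' v) v)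
    (hf' : ContinuousOn f' (Icc u w)) :
    ∑ n ∈ Finset.Ioc ⌊Real.exp u⌋₊ ⌊Real.exp w⌋₊, primeWt n * f (Real.log n) =
      G w - G u + f w * primeErr w - f u * primeErr u - ∫ v in u..w, f' v * primeErr v := by
  set γ := Real.eulerMascheroniConstant
  rw [← uIcc_of_le huw] at hG hf hf'
  have hint : IntervalIntegrable (fun v ↦ f' v * primeErr v) volume u w :=
    (intervalIntegrable_primeErr u w).continuousOn_mul hf'
  have hint' : IntervalIntegrable (fun v ↦ f' v * (v - γ)) volume u w :=
    (hf'.mul (by fun_prop)).intervalIntegrable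
  have hf_int : IntervalIntegrable f volume u w :=
    ContinuousOn.intervalIntegrable fun v hv ↦ (hf v hv).continuousAt.continuousWithinAt
  have hparts : ∫ v in u..w, f' v * (v - γ) = f w * (w - γ) - f u * (u - γ) - (G w - G u) := by
    have hprod := intervalIntegral.integral_deriv_mul_eq_sub hf
      (fun v _ ↦ (hasDerivAt_id v).sub_const γ) hf'.intervalIntegrable intervalIntegrable_const
    simp only [id, mul_one] at hprod
    rw [intervalIntegral.integral_add hint' hf_int,
      intervalIntegral.integral_eq_sub_of_hasDerivAt hG hf_int] at hprod
    exact eq_sub_of_add_eq hprod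
  rw [sum_Ioc_floor_exp_mul (by simp [primeWt]) huw (by rwa [← uIcc_of_le huw])
    (by rwa [← uIcc_of_le huw])]
  have hsplit (v : ℝ) : ∑ n ∈ Finset.Icc 1 ⌊Real.exp v⌋₊, primeWt n = primeErr v + (v - γ) := by
    rw [primeErr, primeSum]
    ring
  simp only [hsplit, mul_add]
  rw [intervalIntegral.integral_add hint hint', hparts]
  ring

lemma sum_isPrimePow_eq_sum_sum {R : Type*} [AddCommMonoid R] (f : ℕ → R) (N : ℕ) :
    ∑ n ∈ Finset.Icc 1 N with IsPrimePow n, f n =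
      ∑ p ∈ Finset.Icc 1 N with p.Prime, ∑ k ∈ Finset.Icc 1 (p.log N), f (p ^ k) := by
  rw [Finset.sum_sigma']
  symm
  refine Finset.sum_bij (fun x _ ↦ x.1 ^ x.2) ?_ ?_ ?_ fun _ _ ↦ rfl
  · rintro ⟨p, k⟩ h
    simp only [Finset.mem_sigma, Finset.mem_filter, Finset.mem_Icc] at h ⊢
    obtain ⟨⟨⟨hp₁, hpN⟩, hp⟩, hk, hkN⟩ := h
    exact ⟨⟨Nat.one_le_pow _ _ hp₁, Nat.pow_le_of_le_log (by lia) hkN⟩,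
      hp.isPrimePow.pow (by lia)⟩
  · rintro ⟨p, k⟩ h ⟨q, l⟩ h' heq
    simp only [Finset.mem_sigma, Finset.mem_filter, Finset.mem_Icc] at h h' heq
    obtain ⟨rfl, rfl⟩ := h.1.2.pow_inj' h'.1.2 (by lia) (by lia) heq
    rfl
  · rintro n hn
    simp only [Finset.mem_filter, Finset.mem_Icc, isPrimePow_nat_iff] at hn
    obtain ⟨⟨hn, hnN⟩, p, k, hp, hk, rfl⟩ := hn
    have hpN : p ≤ N := (Nat.le_self_pow hk.ne' p).trans hnN
    refine ⟨⟨p, k⟩, ?_, rfl⟩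
    simp only [Finset.mem_sigma, Finset.mem_filter, Finset.mem_Icc]
    exact ⟨⟨⟨hp.one_le, hpN⟩, hp⟩, hk, Nat.le_log_of_pow_le hp.one_lt hnN⟩

lemma sum_vonMangoldt_mul (f : ℕ → ℝ) (N : ℕ) :
    ∑ n ∈ Finset.Icc 1 N, vonMangoldt n * f n = ∑ p ∈ Finset.Icc 1 N with p.Prime,
      ∑ k ∈ Finset.Icc 1 (p.log N), Real.log p * f (p ^ k) := by
  have hfilter : ∑ n ∈ Finset.Icc 1 N, vonMangoldt n * f n =
      ∑ n ∈ Finset.Icc 1 N with IsPrimePow n, vonMangoldt n * f n := by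
    refine (Finset.sum_filter_of_ne fun n _ hn ↦ ?_).symm
    contrapose! hn
    rw [vonMangoldt_eq_zero_iff.2 hn, zero_mul]
  rw [hfilter, sum_isPrimePow_eq_sum_sum]
  refine Finset.sum_congr rfl fun p hp ↦ Finset.sum_congr rfl fun k hk ↦ ?_
  rw [vonMangoldt_apply_pow (Nat.one_le_iff_ne_zero.1 (Finset.mem_Icc.1 hk).1),
    vonMangoldt_apply_prime (Finset.mem_filter.1 hp).2]

lemma sum_Icc_div_pow {x : ℝ} (hx : 1 < x) (a : ℝ) (K : ℕ) :
    ∑ k ∈ Finset.Icc 1 K, a / x ^ k = a / (x - 1) - a / (x - 1) * (x ^ K)⁻¹ := by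
  have hx₁ : x - 1 ≠ 0 := sub_ne_zero.2 hx.ne'
  induction K with
  | zero => simp
  | succ K ih =>
    rw [Finset.sum_Icc_succ_top K.succ_pos, ih]
    field_simp
    ring

lemma primeErr_sub_mangoldtErr (v : ℝ) : primeErr v - mangoldtErr v =
    ∑ n ∈ Finset.Icc 1 ⌊Real.exp v⌋₊, primeWt n * ((n : ℝ) ^ n.log ⌊Real.exp v⌋₊)⁻¹ := by
  set N := ⌊Real.exp v⌋₊
  have hmangoldt : ∑ n ∈ Finset.Icc 1 N, vonMangoldt n / n = ∑ p ∈ Finset.Icc 1 N with p.Prime,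
      ∑ k ∈ Finset.Icc 1 (p.log N), Real.log p / (p : ℝ) ^ k := by
    simpa [div_eq_mul_inv] using sum_vonMangoldt_mul (fun n ↦ (n : ℝ)⁻¹) N
  have hdiff : ∑ n ∈ Finset.Icc 1 N, primeWt n - ∑ n ∈ Finset.Icc 1 N, vonMangoldt n / n =
      ∑ n ∈ Finset.Icc 1 N, primeWt n * ((n : ℝ) ^ n.log N)⁻¹ := by
    rw [hmangoldt, Finset.sum_filter, ← Finset.sum_sub_distrib]
    refine Finset.sum_congr rfl fun n _ ↦ ?_
    unfold primeWt
    split_ifs with hn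
    · rw [sum_Icc_div_pow (mod_cast hn.one_lt), sub_sub_cancel]
    · simp
  rw [← hdiff, primeErr, mangoldtErr, primeSum]
  ring

lemma primeSum_le (v : ℝ) :
    primeSum v ≤ 2 * (mangoldtErr v + v - Real.eulerMascheroniConstant) := by
  have hsum : primeSum v ≤ 2 * ∑ n ∈ Finset.Icc 1 ⌊Real.exp v⌋₊, vonMangoldt n / n := by
    rw [primeSum, Finset.mul_sum]
    refine Finset.sum_le_sum fun n _ ↦ ?_
    unfold primeWt
    split_ifs with hn
    · have hn₂ : (2 : ℝ) ≤ n := mod_cast hn.two_le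
      rw [vonMangoldt_apply_prime hn, mul_div_assoc', div_le_div_iff₀ (by linarith) (by linarith)]
      nlinarith [Real.log_natCast_nonneg n]
    · exact mul_nonneg zero_le_two (div_nonneg vonMangoldt_nonneg n.cast_nonneg)
  rw [mangoldtErr]
  linarith

lemma eventually_primeSum_le (hRH : RiemannHypothesis) :
    ∀ᶠ v : ℝ in atTop, primeSum v ≤ 2 * (v + 1) := by
  filter_upwards [(tendsto_mangoldtErr hRH).eventually_le_const one_pos] with v hv
  linarith [primeSum_le v, Real.one_half_lt_eulerMascheroniConstant]

lemma tendsto_affine_mul_exp_neg {c : ℝ} (hc : 0 < c) (a b : ℝ) :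
    Tendsto (fun v : ℝ ↦ (a * v + b) * Real.exp (-c * v)) atTop (𝓝 0) := by
  have hmul : Tendsto (fun v : ℝ ↦ v * Real.exp (-c * v)) atTop (𝓝 0) := by
    simpa using tendsto_rpow_mul_exp_neg_mul_atTop_nhds_zero 1 c hc
  have hexp : Tendsto (fun v : ℝ ↦ Real.exp (-c * v)) atTop (𝓝 0) := by
    simpa using tendsto_rpow_mul_exp_neg_mul_atTop_nhds_zero 0 c hc
  have hadd := (hmul.const_mul a).add (hexp.const_mul b)
  rw [mul_zero, mul_zero, add_zero] at hadd
  exact hadd.congr fun v ↦ by ring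

lemma le_log_floor_exp_iff {n k : ℕ} (hn : 1 < n) {v : ℝ} (hv : 0 ≤ v) :
    k ≤ n.log ⌊Real.exp v⌋₊ ↔ k * Real.log n ≤ v := by
  rw [Nat.le_log_iff_pow_le hn (Nat.floor_pos.2 (Real.one_le_exp hv)).ne',
    Nat.le_floor_iff (Real.exp_pos v).le, Nat.cast_pow, ← Real.log_le_iff_le_exp (by positivity),
    Real.log_pow]

lemma inv_pow_log_floor_exp_le {n k : ℕ} (hn : 1 < n) {v : ℝ} (hv : 0 ≤ v)
    (hk : k * Real.log n ≤ v) :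
    ((n : ℝ) ^ n.log ⌊Real.exp v⌋₊)⁻¹ ≤ Real.exp (-(k / (k + 1)) * v) := by
  set L := n.log ⌊Real.exp v⌋₊
  have hkL : (k : ℝ) ≤ L := mod_cast (le_log_floor_exp_iff hn hv).2 hk
  have hvL : v < (L + 1) * Real.log n := by
    simpa using mt (le_log_floor_exp_iff hn hv).2 (Nat.lt_succ_self L).not_ge
  have hexp : ((n : ℝ) ^ L)⁻¹ = Real.exp (-(L * Real.log n)) := by
    rw [Real.exp_neg, Real.exp_nat_mul, Real.exp_log (by positivity)]
  rw [hexp, Real.exp_le_exp, neg_mul, neg_le_neg_iff, div_mul_eq_mul_div,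
    div_le_iff₀ (by positivity)]
  calc k * v ≤ k * ((L + 1) * Real.log n) := by gcongr
    _ = (L * k + k) * Real.log n := by ring
    _ ≤ (L * k + L) * Real.log n := by gcongr
    _ = L * Real.log n * (k + 1) := by ring

lemma sum_primeWt_mul_inv_pow_log_le {k : ℕ} {u v : ℝ} (hv : 0 ≤ v) (hu : k * u ≤ v) :
    ∑ n ∈ Finset.Icc 1 ⌊Real.exp u⌋₊, primeWt n * ((n : ℝ) ^ n.log ⌊Real.exp v⌋₊)⁻¹ ≤
      Real.exp (-(k / (k + 1)) * v) * primeSum u := by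
  rw [primeSum, Finset.mul_sum]
  refine Finset.sum_le_sum fun n hn ↦ ?_
  rw [mul_comm]
  by_cases hp : n.Prime
  · have hlog := (log_le_iff_mem_Icc_floor_exp hp.ne_zero).2 hn
    refine mul_le_mul_of_nonneg_right ?_ (primeWt_nonneg n)
    exact inv_pow_log_floor_exp_le hp.one_lt hv
      ((mul_le_mul_of_nonneg_left hlog k.cast_nonneg).trans hu)
  · simp [primeWt, hp]

lemma primeWt_mul_inv_pow_nonneg (n k : ℕ) : 0 ≤ primeWt n * ((n : ℝ) ^ k)⁻¹ :=
  mul_nonneg (primeWt_nonneg n) (by positivity)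

lemma primeErr_isLittleO (hRH : RiemannHypothesis) :
    primeErr =o[atTop] fun u : ℝ ↦ Real.exp (-u / 4) := by
  have hbig : (fun v ↦ primeErr v - mangoldtErr v) =O[atTop]
      fun v : ℝ ↦ 2 * (v + 1) * Real.exp (-(1 / 2) * v) := by
    refine .of_bound 1 ?_
    filter_upwards [eventually_primeSum_le hRH, eventually_ge_atTop 0] with v hsum hv
    have hle := sum_primeWt_mul_inv_pow_log_le (k := 1) hv (by simp : ((1 : ℕ) : ℝ) * v ≤ v)
    norm_num only [Nat.cast_one] at hle
    rw [primeErr_sub_mangoldtErr,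
      Real.norm_of_nonneg (Finset.sum_nonneg fun n _ ↦ primeWt_mul_inv_pow_nonneg n _),
      Real.norm_of_nonneg (by positivity), one_mul, mul_comm]
    exact hle.trans (mul_le_mul_of_nonneg_left hsum (Real.exp_pos _).le)
  have hlittle : (fun v : ℝ ↦ 2 * (v + 1) * Real.exp (-(1 / 2) * v)) =o[atTop]
      fun u : ℝ ↦ Real.exp (-u / 4) := by
    refine (isLittleO_iff_tendsto fun u h ↦ absurd h (Real.exp_pos _).ne').2 ?_
    have hlim := tendsto_affine_mul_exp_neg (by norm_num : (0 : ℝ) < 1 / 4) 2 2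
    refine hlim.congr fun v ↦ ?_
    rw [mul_div_assoc, ← Real.exp_sub]
    ring_nf
  simpa using (hbig.trans_isLittleO hlittle).add (mangoldtErr_isLittleO hRH)

lemma tendsto_primeErr (hRH : RiemannHypothesis) : Tendsto primeErr atTop (𝓝 0) :=
  (primeErr_isLittleO hRH).isBigO.trans_tendsto (tendsto_exp_neg_div_atTop four_pos)

/-- The main part `∑ log p / (p (p - 1))`, over `e^{v/2} < p ≤ e^v`, of the contribution of the
prime powers to `primeErr - mangoldtErr`. -/
noncomputable def primeTail (v : ℝ) : ℝ :=
  ∑ n ∈ Finset.Ioc ⌊Real.exp (v / 2)⌋₊ ⌊Real.exp v⌋₊, primeWt n * Real.exp (-Real.log n)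

lemma sum_Ioc_primeWt_mul_inv_pow_log {v : ℝ} (hv : 0 ≤ v) :
    ∑ n ∈ Finset.Ioc ⌊Real.exp (v / 2)⌋₊ ⌊Real.exp v⌋₊,
      primeWt n * ((n : ℝ) ^ n.log ⌊Real.exp v⌋₊)⁻¹ = primeTail v := by
  refine Finset.sum_congr rfl fun n hn ↦ ?_
  by_cases hp : n.Prime
  · rw [Finset.mem_Ioc, Nat.floor_lt (Real.exp_pos _).le, Nat.le_floor_iff (Real.exp_pos _).le,
      ← Real.lt_log_iff_exp_lt (mod_cast hp.pos), ← Real.log_le_iff_le_exp (mod_cast hp.pos)] at hn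
    have hlog₁ : 1 ≤ n.log ⌊Real.exp v⌋₊ :=
      (le_log_floor_exp_iff hp.one_lt hv).2 (by simpa using hn.2)
    have hlog₂ : ¬ 2 ≤ n.log ⌊Real.exp v⌋₊ :=
      mt (le_log_floor_exp_iff hp.one_lt hv).1 (by push_cast; linarith)
    have hlog : n.log ⌊Real.exp v⌋₊ = 1 := by lia
    rw [hlog, pow_one, Real.exp_neg, Real.exp_log (mod_cast hp.pos)]
  · simp [primeWt, hp]

lemma primeErr_sub_mangoldtErr_mem_Icc {v : ℝ} (hv : 0 ≤ v) : primeErr v - mangoldtErr v ∈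
    Icc (primeTail v) (primeTail v + Real.exp (-(2 / 3) * v) * primeSum (v / 2)) := by
  have hle := sum_primeWt_mul_inv_pow_log_le (k := 2) (u := v / 2) hv (by push_cast; linarith)
  norm_num only [Nat.cast_ofNat] at hle
  rw [primeErr_sub_mangoldtErr, sum_Icc_eq_add_sum_Ioc (M := ⌊Real.exp (v / 2)⌋₊)
    (Nat.floor_mono (Real.exp_le_exp.2 (by linarith))), sum_Ioc_primeWt_mul_inv_pow_log hv,
    add_comm (Finset.sum _ _)]
  exact ⟨le_add_of_nonneg_right (Finset.sum_nonneg fun n _ ↦ primeWt_mul_inv_pow_nonneg n _),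
    add_le_add_right hle _⟩

lemma hasDerivAt_exp_neg (x : ℝ) :
    HasDerivAt (fun x : ℝ ↦ Real.exp (-x)) (-Real.exp (-x)) x := by
  simpa using (hasDerivAt_neg x).exp

lemma tendsto_exp_mul_integral_exp_neg_mul {α : Type*} {l : Filter α} {E : ℝ → ℝ} {u w : α → ℝ}
    (hE : Tendsto E atTop (𝓝 0)) (hu : Tendsto u l atTop) (huw : ∀ᶠ a in l, u a ≤ w a) :
    Tendsto (fun a ↦ Real.exp (u a) * ∫ x in u a..w a, Real.exp (-x) * E x) l (𝓝 0) := by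
  rw [Metric.tendsto_nhds]
  intro ε hε
  have hsmall : ∀ᶠ a in l, ∀ x, u a ≤ x → |E x| ≤ ε / 2 := by
    refine hu.eventually (eventually_forall_ge_atTop.2 ?_)
    simpa using hE.norm.eventually_le_const (by simpa using half_pos hε)
  filter_upwards [hsmall, huw] with a ha hle
  have hint : ∫ x in u a..w a, ε / 2 * Real.exp (-x) =
      ε / 2 * (Real.exp (-u a) - Real.exp (-w a)) := by
    rw [intervalIntegral.integral_const_mul]
    simp
  have hbound : |∫ x in u a..w a, Real.exp (-x) * E x| ≤ ε / 2 * Real.exp (-u a) := by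
    have hg : Continuous fun x ↦ ε / 2 * Real.exp (-x) := by fun_prop
    refine (intervalIntegral.norm_integral_le_of_norm_le (f := fun x ↦ Real.exp (-x) * E x) hle
      (.of_forall fun x hx ↦ ?_) (hg.intervalIntegrable _ _)).trans ?_
    · rw [norm_mul, Real.norm_of_nonneg (Real.exp_pos _).le, mul_comm]
      exact mul_le_mul_of_nonneg_right (ha x hx.1.le) (Real.exp_pos _).le
    · rw [hint]
      exact mul_le_mul_of_nonneg_left (sub_le_self _ (Real.exp_pos _).le) (half_pos hε).le
  calc dist (Real.exp (u a) * ∫ x in u a..w a, Real.exp (-x) * E x) 0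
      = Real.exp (u a) * |∫ x in u a..w a, Real.exp (-x) * E x| := by
        rw [Real.dist_0_eq_abs, abs_mul, Real.abs_exp]
    _ ≤ Real.exp (u a) * (ε / 2 * Real.exp (-u a)) := by gcongr
    _ = ε / 2 := by rw [mul_left_comm, ← Real.exp_add, add_neg_cancel, Real.exp_zero, mul_one]
    _ < ε := half_lt_self hε

lemma exp_mul_primeTail {v : ℝ} (hv : 0 ≤ v) : Real.exp (v / 2) * primeTail v =
    1 - Real.exp (-v / 2) + Real.exp (-v / 2) * primeErr v - primeErr (v / 2) +
      Real.exp (v / 2) * ∫ x in v / 2..v, Real.exp (-x) * primeErr x := by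
  have hmul₁ : Real.exp (v / 2) * Real.exp (-v) = Real.exp (-v / 2) := by
    rw [← Real.exp_add]
    ring_nf
  have hmul₂ : Real.exp (v / 2) * Real.exp (-(v / 2)) = 1 := by
    rw [← Real.exp_add, add_neg_cancel, Real.exp_zero]
  rw [primeTail, sum_Ioc_primeWt_mul (f := fun x ↦ Real.exp (-x)) (by linarith)
    (fun x _ ↦ by simpa using (hasDerivAt_exp_neg x).fun_neg) (fun x _ ↦ hasDerivAt_exp_neg x)
    (by fun_prop)]
  simp only [neg_mul, intervalIntegral.integral_neg]
  linear_combination (primeErr v - 1) * hmul₁ + (1 - primeErr (v / 2)) * hmul₂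

lemma tendsto_exp_mul_primeTail (hRH : RiemannHypothesis) :
    Tendsto (fun v ↦ Real.exp (v / 2) * primeTail v) atTop (𝓝 1) := by
  have hE := tendsto_primeErr hRH
  have hhalf : Tendsto (fun v : ℝ ↦ v / 2) atTop atTop := tendsto_id.atTop_div_const two_pos
  have hexp := tendsto_exp_neg_div_atTop two_pos
  have hint := tendsto_exp_mul_integral_exp_neg_mul (w := id) hE hhalf <| by
    filter_upwards [eventually_ge_atTop 0] with v hv using half_le_self hv
  have hlim := (((hexp.const_sub 1).add (hexp.mul hE)).sub (hE.comp hhalf)).add hint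
  norm_num only at hlim
  refine hlim.congr' ?_
  filter_upwards [eventually_ge_atTop 0] with v hv using (exp_mul_primeTail hv).symm

theorem tendsto_exp_mul_primeErr_sub (hRH : RiemannHypothesis) :
    Tendsto (fun v ↦ Real.exp (v / 2) * (primeErr v - mangoldtErr v)) atTop (𝓝 1) := by
  have htail := tendsto_exp_mul_primeTail hRH
  have hhalf : Tendsto (fun v : ℝ ↦ v / 2) atTop atTop := tendsto_id.atTop_div_const two_pos
  have hrest := tendsto_affine_mul_exp_neg (by norm_num : (0 : ℝ) < 1 / 6) 1 2
  refine tendsto_of_tendsto_of_tendsto_of_le_of_le' htail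
    (by simpa only [add_zero] using htail.add hrest) ?_ ?_
  · filter_upwards [eventually_ge_atTop 0] with v hv
    exact mul_le_mul_of_nonneg_left (primeErr_sub_mangoldtErr_mem_Icc hv).1 (Real.exp_pos _).le
  · filter_upwards [eventually_ge_atTop 0, hhalf.eventually (eventually_primeSum_le hRH)]
      with v hv hsum
    have hmul : Real.exp (v / 2) * Real.exp (-(2 / 3) * v) = Real.exp (-(1 / 6) * v) := by
      rw [← Real.exp_add]
      ring_nf
    calc Real.exp (v / 2) * (primeErr v - mangoldtErr v)
        ≤ Real.exp (v / 2) * (primeTail v + Real.exp (-(2 / 3) * v) * primeSum (v / 2)) := by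
          gcongr
          exact (primeErr_sub_mangoldtErr_mem_Icc hv).2
      _ = Real.exp (v / 2) * primeTail v + Real.exp (-(1 / 6) * v) * primeSum (v / 2) := by
          rw [mul_add, ← mul_assoc, hmul]
      _ ≤ Real.exp (v / 2) * primeTail v + Real.exp (-(1 / 6) * v) * (2 * (v / 2 + 1)) := by
          gcongr
      _ = Real.exp (v / 2) * primeTail v + (1 * v + 2) * Real.exp (-(1 / 6) * v) := by ring

end Primes

section IntegralPrimeErr

open MeasureTheory Set Topology

lemma integral_div_sq_sub {f : ℝ → ℝ} {u w : ℝ} (hu : 0 < u) (huw : u ≤ w)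
    (hf : IntervalIntegrable f volume u w) (a : ℝ) :
    (∫ v in u..w, f v / v ^ 2) - a / u ^ 2 =
      ((∫ v in u..w, f v) - a) / w ^ 2 + ∫ x in u..w, 2 / x ^ 3 * ((∫ v in u..x, f v) - a) := by
  have hne {x : ℝ} (hx : x ∈ uIcc u w) : x ≠ 0 := by
    rw [uIcc_of_le huw] at hx
    exact (hu.trans_le hx.1).ne'
  have hinv : AbsolutelyContinuousOnInterval (fun x : ℝ ↦ (x ^ 2)⁻¹) u w :=
    ((contDiff_id.pow 2).contDiffOn.inv fun x hx ↦ pow_ne_zero 2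
      (hne hx)).absolutelyContinuousOnInterval
  have hprim : AbsolutelyContinuousOnInterval (fun x ↦ (∫ v in u..x, f v) - a) u w :=
    (hf.absolutelyContinuousOnInterval_intervalIntegral left_mem_uIcc).sub
      contDiff_const.contDiffOn.absolutelyContinuousOnInterval
  have hparts := hinv.integral_mul_deriv_eq_deriv_mul hprim
  have hleft : ∫ x in u..w, (x ^ 2)⁻¹ * deriv (fun x ↦ (∫ v in u..x, f v) - a) x =
      ∫ v in u..w, f v / v ^ 2 := by
    refine intervalIntegral.integral_congr_ae ?_
    filter_upwards [hf.ae_hasDerivAt_integral] with x hx hxm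
    rw [((hx (uIoc_subset_uIcc hxm) u left_mem_uIcc).sub_const a).deriv, div_eq_inv_mul]
  have hright : ∫ x in u..w, deriv (fun x : ℝ ↦ (x ^ 2)⁻¹) x * ((∫ v in u..x, f v) - a) =
      -∫ x in u..w, 2 / x ^ 3 * ((∫ v in u..x, f v) - a) := by
    rw [← intervalIntegral.integral_neg]
    refine intervalIntegral.integral_congr fun x hx ↦ ?_
    have hx₀ := hne hx
    simp only [((hasDerivAt_pow 2 x).fun_inv (pow_ne_zero 2 hx₀)).deriv]
    field_simp
    ring
  rw [hleft, hright, intervalIntegral.integral_same] at hparts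
  rw [hparts]
  ring

lemma abs_integral_two_div_cube_mul_le {g : ℝ → ℝ} {u w b c : ℝ} (hu : 0 < u) (huw : u ≤ w)
    (hc : 0 ≤ c) (hg : ∀ x, u ≤ x → |g x| ≤ b + c * Real.exp (-x / 2)) :
    |∫ x in u..w, 2 / x ^ 3 * g x| ≤
      b / u ^ 2 - b / w ^ 2 + 4 * c * Real.exp (-u / 2) / u ^ 3 := by
  have hderiv (x : ℝ) (hx : u ≤ x) :
      HasDerivAt (fun x ↦ -(b / x ^ 2) - 4 * c / u ^ 3 * Real.exp (-x / 2))
        (2 / x ^ 3 * b + 2 * c / u ^ 3 * Real.exp (-x / 2)) x := by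
    have hx₀ := hu.trans_le hx
    convert! (((hasDerivAt_const x b).fun_div (hasDerivAt_pow 2 x) (by positivity)).fun_neg.sub
      (((hasDerivAt_neg x).div_const 2).exp.const_mul (4 * c / u ^ 3))) using 1
    field_simp
    ring
  have hcont : ContinuousOn (fun x ↦ 2 / x ^ 3 * b + 2 * c / u ^ 3 * Real.exp (-x / 2))
      (uIcc u w) := by
    rw [uIcc_of_le huw]
    refine ((continuousOn_const.div (by fun_prop) fun x hx ↦ ?_).mul continuousOn_const).add
      (by fun_prop)
    exact pow_ne_zero 3 (hu.trans_le hx.1).ne'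
  have hbound (x : ℝ) (hx : x ∈ Ioc u w) :
      ‖2 / x ^ 3 * g x‖ ≤ 2 / x ^ 3 * b + 2 * c / u ^ 3 * Real.exp (-x / 2) := by
    have hx₀ := hu.trans hx.1
    calc ‖2 / x ^ 3 * g x‖ = 2 / x ^ 3 * |g x| := by
          rw [norm_mul, Real.norm_of_nonneg (by positivity), Real.norm_eq_abs]
      _ ≤ 2 / x ^ 3 * (b + c * Real.exp (-x / 2)) := by gcongr; exact hg x hx.1.le
      _ = 2 / x ^ 3 * b + 2 * c / x ^ 3 * Real.exp (-x / 2) := by ring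
      _ ≤ _ := by gcongr; exact hx.1.le
  calc |∫ x in u..w, 2 / x ^ 3 * g x|
      ≤ ∫ x in u..w, (2 / x ^ 3 * b + 2 * c / u ^ 3 * Real.exp (-x / 2)) :=
        intervalIntegral.norm_integral_le_of_norm_le huw (.of_forall hbound)
          hcont.intervalIntegrable
    _ = b / u ^ 2 - b / w ^ 2 + 4 * c * Real.exp (-u / 2) / u ^ 3 -
          4 * c / u ^ 3 * Real.exp (-w / 2) := by
        rw [intervalIntegral.integral_eq_sub_of_hasDerivAt
          (fun x hx ↦ hderiv x (by simp_all)) hcont.intervalIntegrable]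
        ring
    _ ≤ _ := sub_le_self _ (by positivity)

lemma abs_integral_div_sq_sub_le {f : ℝ → ℝ} {u w a b c : ℝ} (hu : 0 < u) (huw : u ≤ w)
    (hc : 0 ≤ c) (hf : IntervalIntegrable f volume u w)
    (h : ∀ x, u ≤ x → |(∫ v in u..x, f v) - a| ≤ b + c * Real.exp (-x / 2)) :
    |(∫ v in u..w, f v / v ^ 2) - a / u ^ 2| ≤
      b / u ^ 2 + c * Real.exp (-w / 2) / w ^ 2 + 4 * c * Real.exp (-u / 2) / u ^ 3 := by
  have hend : |((∫ v in u..w, f v) - a) / w ^ 2| ≤ (b + c * Real.exp (-w / 2)) / w ^ 2 := by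
    rw [abs_div, abs_sq]
    exact div_le_div_of_nonneg_right (h w huw) (sq_nonneg w)
  rw [integral_div_sq_sub hu huw hf]
  refine (abs_add_le _ _).trans
    ((add_le_add hend (abs_integral_two_div_cube_mul_le hu huw hc h)).trans_eq ?_)
  ring

lemma integral_exp_neg_half (u w : ℝ) :
    ∫ v in u..w, Real.exp (-v / 2) = 2 * Real.exp (-u / 2) - 2 * Real.exp (-w / 2) := by
  have hderiv (v : ℝ) : HasDerivAt (fun v ↦ -(2 * Real.exp (-v / 2))) (Real.exp (-v / 2)) v := by
    convert! (((hasDerivAt_neg v).div_const 2).exp.const_mul 2).fun_neg using 1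
    ring
  rw [intervalIntegral.integral_eq_sub_of_hasDerivAt (fun v _ ↦ hderiv v)
    (Continuous.intervalIntegrable (by fun_prop) _ _)]
  ring

lemma eventually_abs_integral_primeErr_sub_mangoldtErr_le (hRH : RiemannHypothesis) {δ : ℝ}
    (hδ : 0 < δ) : ∀ᶠ u in atTop, ∀ x, u ≤ x →
      |(∫ v in u..x, (primeErr v - mangoldtErr v)) -
        (2 * Real.exp (-u / 2) - 2 * Real.exp (-x / 2))| ≤ δ * (2 * Real.exp (-u / 2)) := by
  have hclose : ∀ᶠ v in atTop, |Real.exp (v / 2) * (primeErr v - mangoldtErr v) - 1| ≤ δ := by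
    refine Tendsto.eventually_le_const hδ ?_
    simpa using ((tendsto_exp_mul_primeErr_sub hRH).sub_const 1).abs
  filter_upwards [eventually_forall_ge_atTop.2 hclose] with u hu x hux
  have hexp : Continuous fun v : ℝ ↦ Real.exp (-v / 2) := by fun_prop
  have hbound (v : ℝ) (hv : v ∈ Ioc u x) :
      ‖primeErr v - mangoldtErr v - Real.exp (-v / 2)‖ ≤ δ * Real.exp (-v / 2) := by
    have hmul : Real.exp (-v / 2) * Real.exp (v / 2) = 1 := by
      rw [← Real.exp_add, neg_div, neg_add_cancel, Real.exp_zero]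
    calc ‖primeErr v - mangoldtErr v - Real.exp (-v / 2)‖
        = |Real.exp (v / 2) * (primeErr v - mangoldtErr v) - 1| * Real.exp (-v / 2) := by
          rw [← Real.abs_exp (-v / 2), ← abs_mul, Real.abs_exp, Real.norm_eq_abs]
          congr 1
          linear_combination (mangoldtErr v - primeErr v) * hmul
      _ ≤ δ * Real.exp (-v / 2) := by gcongr; exact hu v hv.1.le
  calc |(∫ v in u..x, (primeErr v - mangoldtErr v)) -
        (2 * Real.exp (-u / 2) - 2 * Real.exp (-x / 2))|
      = ‖∫ v in u..x, (primeErr v - mangoldtErr v - Real.exp (-v / 2))‖ := by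
        rw [intervalIntegral.integral_sub ((intervalIntegrable_primeErr u x).sub
          (intervalIntegrable_mangoldtErr u x)) (hexp.intervalIntegrable u x),
          integral_exp_neg_half, Real.norm_eq_abs]
    _ ≤ ∫ v in u..x, δ * Real.exp (-v / 2) :=
        intervalIntegral.norm_integral_le_of_norm_le hux (.of_forall hbound)
          ((hexp.const_mul δ).intervalIntegrable u x)
    _ = δ * (2 * Real.exp (-u / 2) - 2 * Real.exp (-x / 2)) := by
        rw [intervalIntegral.integral_const_mul, integral_exp_neg_half]
    _ ≤ δ * (2 * Real.exp (-u / 2)) := by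
        gcongr
        exact sub_le_self _ (by positivity)

lemma eventually_abs_integral_primeErr_sub_le (hRH : RiemannHypothesis) :
    ∀ᶠ u in atTop, ∀ x, u ≤ x → |(∫ v in u..x, primeErr v) - 2 * Real.exp (-u / 2)| ≤
      0.04995 * Real.exp (-u / 2) + 3 * Real.exp (-x / 2) := by
  filter_upwards [eventually_abs_integral_primeErr_sub_mangoldtErr_le hRH (δ := 0.000025)
    (by norm_num), eventually_forall_ge_atTop.2 (eventually_abs_zeroTail_re_le hRH),
    eventually_ge_atTop 0] with u hdiff hzero hu x hux
  have hsplit : ∫ v in u..x, primeErr v =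
      (∫ v in u..x, (primeErr v - mangoldtErr v)) + ((zeroTail u).re - (zeroTail x).re) := by
    rw [intervalIntegral.integral_sub (intervalIntegrable_primeErr u x)
      (intervalIntegrable_mangoldtErr u x), integral_mangoldtErr_eq_zeroTail hRH hu (hu.trans hux)]
    ring
  have hx := Real.exp_pos (-x / 2)
  have hzu := abs_le.1 (hzero u le_rfl)
  have hzx := abs_le.1 (hzero x hux)
  have hd := abs_le.1 (hdiff x hux)
  rw [hsplit, abs_le]
  constructor <;> linarith

lemma eventually_abs_integral_primeErr_div_sq_sub_le (hRH : RiemannHypothesis) :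
    ∀ᶠ u in atTop, ∀ w, u ≤ w →
      |(∫ v in u..w, primeErr v / v ^ 2) - 2 * (Real.exp (-u / 2) / u ^ 2)| ≤
        0.04998 * (Real.exp (-u / 2) / u ^ 2) + 3 * Real.exp (-w / 2) := by
  filter_upwards [eventually_abs_integral_primeErr_sub_le hRH, eventually_ge_atTop 1000000]
    with u hu hu₁ w huw
  have hu₀ : 0 < u := by linarith
  have hcube : 4 * 3 * Real.exp (-u / 2) / u ^ 3 ≤ 0.00003 * (Real.exp (-u / 2) / u ^ 2) := by
    rw [pow_succ u 2, ← div_div, mul_div_assoc, mul_div_right_comm]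
    gcongr
    rw [div_le_iff₀ hu₀]
    linarith
  have hw : 3 * Real.exp (-w / 2) / w ^ 2 ≤ 3 * Real.exp (-w / 2) :=
    div_le_self (by positivity) (one_le_pow₀ (by linarith))
  have hle := abs_integral_div_sq_sub_le hu₀ huw zero_le_three (intervalIntegrable_primeErr u w) hu
  rw [mul_div_assoc, mul_div_assoc] at hle
  linarith

end IntegralPrimeErr

section Mertens

open ArithmeticFunction Asymptotics MeasureTheory Set Topology

/-- The weight `-log (1 - 1 / p)` on primes: the logarithm of a factor of the Euler product. -/
noncomputable def eulerWt (n : ℕ) : ℝ := if n.Prime then -Real.log (1 - 1 / n) else 0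

/-- The summatory function of `eulerWt` on a logarithmic scale. -/
noncomputable def eulerSum (v : ℝ) : ℝ := ∑ n ∈ Finset.Icc 1 ⌊Real.exp v⌋₊, eulerWt n

/-- The error term `-∑_{p ≤ e^v} log (1 - 1 / p) - log v - γ` in Mertens' third theorem. -/
noncomputable def eulerErr (v : ℝ) : ℝ :=
  eulerSum v - Real.log v - Real.eulerMascheroniConstant

/-- The first-order approximation `primeErr v / v - eulerErr v` to `log (γ_r e^γ)` at
`v = log p_r`. -/
noncomputable def gammaErr (v : ℝ) : ℝ := primeErr v / v - eulerErr v

/-- The sum `∑_{n ≤ e^v} Λ(n) / (n log n)`, which replaces `eulerSum` where an exact Laplace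
transform is needed. -/
noncomputable def mangoldtLogSum (v : ℝ) : ℝ :=
  ∑ n ∈ Finset.Icc 1 ⌊Real.exp v⌋₊, vonMangoldt n / (n * Real.log n)

lemma eulerWt_mem_Icc {p : ℕ} (hp : p.Prime) :
    eulerWt p ∈ Icc (1 / (p : ℝ)) (1 / ((p : ℝ) - 1)) := by
  have hp₁ : (1 : ℝ) < p := mod_cast hp.one_lt
  have hpos : 0 < 1 - 1 / (p : ℝ) := sub_pos.2 ((div_lt_one (by linarith)).2 hp₁)
  have hle := Real.log_le_sub_one_of_pos hpos
  have hge := Real.one_sub_inv_le_log_of_pos hpos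
  have hinv : (1 - 1 / (p : ℝ))⁻¹ = 1 + 1 / ((p : ℝ) - 1) := by
    have : (p : ℝ) - 1 ≠ 0 := by linarith
    field_simp
    ring
  rw [eulerWt, if_pos hp, mem_Icc]
  constructor <;> linarith

lemma primeWt_mul_inv_log_sub_eulerWt_mem_Icc {n : ℕ} (hn : 1 < n) :
    primeWt n * (Real.log n)⁻¹ - eulerWt n ∈ Icc 0 (1 / ((n : ℝ) - 1) - 1 / n) := by
  have hn₁ : (1 : ℝ) < n := mod_cast hn
  by_cases hp : n.Prime
  · have hprime : primeWt n * (Real.log n)⁻¹ = 1 / ((n : ℝ) - 1) := by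
      rw [primeWt, if_pos hp, div_mul_eq_mul_div, mul_inv_cancel₀ (Real.log_pos hn₁).ne']
    rw [hprime]
    exact ⟨sub_nonneg.2 (eulerWt_mem_Icc hp).2, sub_le_sub_left (eulerWt_mem_Icc hp).1 _⟩
  · simpa [primeWt, eulerWt, hp] using inv_anti₀ (by linarith) (sub_le_self (n : ℝ) zero_le_one)

lemma sum_Ioc_inv_sub_inv {M N : ℕ} (h : M ≤ N) :
    ∑ n ∈ Finset.Ioc M N, (1 / ((n : ℝ) - 1) - 1 / n) = 1 / M - 1 / N := by
  induction N, h using Nat.le_induction with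
  | base => simp
  | succ N h ih =>
    rw [Finset.sum_Ioc_succ_top (by lia), ih]
    push_cast
    ring

lemma one_div_floor_exp_le {u : ℝ} (hu : 0 ≤ u) :
    1 / (⌊Real.exp u⌋₊ : ℝ) ≤ 2 * Real.exp (-u) := by
  have hone : (1 : ℝ) ≤ ⌊Real.exp u⌋₊ := by
    exact_mod_cast (Nat.one_le_floor_iff _).2 (Real.one_le_exp hu)
  have hlt := Nat.lt_floor_add_one (Real.exp u)
  rw [Real.exp_neg, ← div_eq_mul_inv, div_le_div_iff₀ (by linarith) (Real.exp_pos u)]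
  linarith

lemma sum_Ioc_primeWt_mul_inv_log {u w : ℝ} (hu : 0 < u) (huw : u ≤ w) :
    ∑ n ∈ Finset.Ioc ⌊Real.exp u⌋₊ ⌊Real.exp w⌋₊, primeWt n * (Real.log n)⁻¹ =
      Real.log w - Real.log u + primeErr w / w - primeErr u / u +
        ∫ v in u..w, primeErr v / v ^ 2 := by
  have hne (v : ℝ) (hv : v ∈ Icc u w) : v ≠ 0 := (hu.trans_le hv.1).ne'
  rw [sum_Ioc_primeWt_mul (f := fun v ↦ v⁻¹) huw (fun v hv ↦ Real.hasDerivAt_log (hne v hv))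
    (fun v hv ↦ hasDerivAt_inv (hne v hv))
    ((continuousOn_id.pow 2).inv₀ fun v hv ↦ pow_ne_zero 2 (hne v hv)).neg]
  simp only [neg_mul, intervalIntegral.integral_neg, sub_neg_eq_add, div_eq_inv_mul]

lemma abs_gammaErr_sub_sub_integral_le {u w : ℝ} (hu : 0 < u) (huw : u ≤ w) :
    |gammaErr u - gammaErr w - ∫ v in u..w, primeErr v / v ^ 2| ≤ 2 * Real.exp (-u) := by
  have hfloor : ⌊Real.exp u⌋₊ ≤ ⌊Real.exp w⌋₊ := Nat.floor_mono (Real.exp_le_exp.2 huw)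
  have hone : 1 ≤ ⌊Real.exp u⌋₊ := (Nat.one_le_floor_iff _).2 (Real.one_le_exp hu.le)
  have hmem (n : ℕ) (hn : n ∈ Finset.Ioc ⌊Real.exp u⌋₊ ⌊Real.exp w⌋₊) :=
    primeWt_mul_inv_log_sub_eulerWt_mem_Icc (hone.trans_lt (Finset.mem_Ioc.1 hn).1)
  have hdiff : gammaErr u - gammaErr w - ∫ v in u..w, primeErr v / v ^ 2 =
      -∑ n ∈ Finset.Ioc ⌊Real.exp u⌋₊ ⌊Real.exp w⌋₊,
        (primeWt n * (Real.log n)⁻¹ - eulerWt n) := by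
    rw [Finset.sum_sub_distrib, sum_Ioc_primeWt_mul_inv_log hu huw, gammaErr, gammaErr, eulerErr,
      eulerErr, eulerSum, eulerSum, sum_Icc_eq_add_sum_Ioc hfloor]
    ring
  have hnonneg : 0 ≤ ∑ n ∈ Finset.Ioc ⌊Real.exp u⌋₊ ⌊Real.exp w⌋₊,
      (primeWt n * (Real.log n)⁻¹ - eulerWt n) := Finset.sum_nonneg fun n hn ↦ (hmem n hn).1
  rw [hdiff, abs_neg, abs_of_nonneg hnonneg]
  calc ∑ n ∈ Finset.Ioc ⌊Real.exp u⌋₊ ⌊Real.exp w⌋₊, (primeWt n * (Real.log n)⁻¹ - eulerWt n)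
      ≤ ∑ n ∈ Finset.Ioc ⌊Real.exp u⌋₊ ⌊Real.exp w⌋₊, (1 / ((n : ℝ) - 1) - 1 / n) :=
        Finset.sum_le_sum fun n hn ↦ (hmem n hn).2
    _ = 1 / ⌊Real.exp u⌋₊ - 1 / ⌊Real.exp w⌋₊ := sum_Ioc_inv_sub_inv hfloor
    _ ≤ 1 / ⌊Real.exp u⌋₊ := sub_le_self _ (by positivity)
    _ ≤ 2 * Real.exp (-u) := one_div_floor_exp_le hu.le

lemma eventually_sq_mul_exp_neg_half_le {ε : ℝ} (hε : 0 < ε) :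
    ∀ᶠ u : ℝ in atTop, u ^ 2 * Real.exp (-u / 2) ≤ ε := by
  filter_upwards [(tendsto_rpow_mul_exp_neg_mul_atTop_nhds_zero 2 (1 / 2)
    one_half_pos).eventually_le_const hε] with u hu
  rwa [Real.rpow_two, neg_mul, one_div_mul_eq_div, ← neg_div] at hu

lemma eventually_abs_gammaErr_sub_sub_le (hRH : RiemannHypothesis) : ∀ᶠ u in atTop, ∀ w, u ≤ w →
    |gammaErr u - gammaErr w - 2 * (Real.exp (-u / 2) / u ^ 2)| ≤
      0.04999 * (Real.exp (-u / 2) / u ^ 2) + 3 * Real.exp (-w / 2) := by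
  filter_upwards [eventually_abs_integral_primeErr_div_sq_sub_le hRH,
    eventually_sq_mul_exp_neg_half_le (ε := 0.000005) (by norm_num), eventually_gt_atTop 0]
    with u hint hsmall hu w huw
  have hexp : 2 * Real.exp (-u) ≤ 0.00001 * (Real.exp (-u / 2) / u ^ 2) := by
    have hsq : Real.exp (-u) = Real.exp (-u / 2) * Real.exp (-u / 2) := by
      rw [← Real.exp_add, add_halves]
    rw [hsq, ← mul_div_assoc, le_div_iff₀ (by positivity)]
    nlinarith [Real.exp_pos (-u / 2)]
  have hdiff := abs_le.1 (abs_gammaErr_sub_sub_integral_le hu huw)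
  have hint' := abs_le.1 (hint w huw)
  rw [abs_le]
  constructor <;> linarith

lemma exists_tendsto_gammaErr (hRH : RiemannHypothesis) :
    ∃ c, Tendsto gammaErr atTop (𝓝 c) := by
  refine cauchySeq_tendsto_of_complete (Metric.cauchySeq_iff'.2 fun ε hε ↦ ?_)
  have hexp : ∀ᶠ u : ℝ in atTop, Real.exp (-u / 2) < ε / 6 :=
    (tendsto_exp_neg_div_atTop two_pos).eventually_lt_const (by positivity)
  obtain ⟨u, hu, hsmall, hu₁⟩ :=
    ((eventually_abs_gammaErr_sub_sub_le hRH).and (hexp.and (eventually_ge_atTop 1))).exists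
  refine ⟨u, fun w huw ↦ ?_⟩
  have hdiff := abs_le.1 (hu w huw)
  have hu' : Real.exp (-u / 2) / u ^ 2 ≤ Real.exp (-u / 2) :=
    div_le_self (Real.exp_pos _).le (one_le_pow₀ hu₁)
  have hu₀ : 0 ≤ Real.exp (-u / 2) / u ^ 2 := by positivity
  have hw : Real.exp (-w / 2) ≤ Real.exp (-u / 2) := Real.exp_le_exp.2 (by linarith)
  rw [Real.dist_eq, abs_lt]
  constructor <;> linarith

lemma LSeries_vonMangoldt_div_log {s : ℝ} (hs : 0 < s) :
    LSeries (fun n ↦ ((vonMangoldt n / (n * Real.log n) : ℝ) : ℂ)) s =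
      Real.log (riemannZeta (1 + s : ℝ)).re := by
  rw [log_riemannZeta_eq (by linarith), LSeries, Complex.ofReal_tsum]
  refine tsum_congr fun n ↦ ?_
  rcases n.eq_zero_or_pos with rfl | hn
  · simp
  · rw [LSeries.term_of_ne_zero hn.ne', ← Complex.ofReal_natCast,
      ← Complex.ofReal_cpow (by positivity), ← Complex.ofReal_div, Real.rpow_add (by positivity),
      Real.rpow_one]
    congr 1
    field_simp

lemma LSeriesSummable_vonMangoldt_div_log {s : ℝ} (hs : 0 < s) :
    LSeriesSummable (fun n ↦ ((vonMangoldt n / (n * Real.log n) : ℝ) : ℂ)) s := by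
  refine LSeriesSummable_of_le_const_mul_rpow (x := 0) (by simpa using hs) ⟨1, fun n hn ↦ ?_⟩
  rw [one_mul, zero_sub, Real.rpow_neg_one, Complex.norm_real, Real.norm_of_nonneg
    (div_nonneg vonMangoldt_nonneg (by positivity)), mul_comm, ← div_div, ← one_div]
  gcongr
  exact div_le_one_of_le₀ vonMangoldt_le_log (Real.log_natCast_nonneg n)

lemma hasLaplace_mangoldtLogSum {s : ℝ} (hs : 0 < s) :
    HasLaplace (fun u ↦ (mangoldtLogSum u : ℂ)) s (Real.log (riemannZeta (1 + s : ℝ)).re / s) := by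
  have h := hasLaplace_sum_Icc_floor_exp (s := s) (by simpa using hs)
    (LSeriesSummable_vonMangoldt_div_log hs)
  rw [LSeries_vonMangoldt_div_log hs] at h
  simpa only [mangoldtLogSum, Complex.ofReal_sum] using h

lemma tendsto_log_riemannZeta_add_log :
    Tendsto (fun s : ℝ ↦ Real.log (riemannZeta (1 + s : ℝ)).re + Real.log s) (𝓝[>] 0) (𝓝 0) := by
  have hlim := (isLittleO_one_iff ℝ).1 log_riemannZeta_add_log_sub_isLittleO_ofReal
  have hshift : Tendsto (fun s : ℝ ↦ 1 + s) (𝓝[>] 0) (𝓝[>] 1) := by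
    have h : Tendsto (fun s : ℝ ↦ 1 + s) (𝓝 0) (𝓝 1) := by
      simpa using (continuous_const_add (1 : ℝ)).tendsto 0
    refine tendsto_nhdsWithin_iff.2 ⟨h.mono_left nhdsWithin_le_nhds, ?_⟩
    filter_upwards [self_mem_nhdsWithin] with s hs
    simpa using hs
  simpa [Function.comp_def] using hlim.comp hshift

lemma abs_eulerWt_sub_sum_le {p : ℕ} (hp : p.Prime) (K : ℕ) :
    |eulerWt p - ∑ k ∈ Finset.Icc 1 K, 1 / (k * (p : ℝ) ^ k)| ≤
      2 * (primeWt p * ((p : ℝ) ^ K)⁻¹) := by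
  have hp₁ : (1 : ℝ) < p := mod_cast hp.one_lt
  have hp₂ : 0 < (p : ℝ) - 1 := sub_pos.2 hp₁
  have hlog : 1 / 2 ≤ Real.log p :=
    (by linarith [Real.log_two_gt_d9] : 1 / 2 ≤ Real.log 2).trans
      (Real.log_le_log two_pos (mod_cast hp.two_le))
  have hinv : |(p : ℝ)⁻¹| < 1 := by
    rw [abs_of_pos (by positivity)]
    exact inv_lt_one_of_one_lt₀ hp₁
  have hsum : ∑ k ∈ Finset.Icc 1 K, 1 / (k * (p : ℝ) ^ k) =
      ∑ i ∈ Finset.range K, (p : ℝ)⁻¹ ^ (i + 1) / (i + 1) := by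
    rw [Finset.range_eq_Ico]
    refine (Finset.sum_Ico_add' (fun k : ℕ ↦ 1 / (k * (p : ℝ) ^ k)) 0 K 1).symm.trans ?_
    refine Finset.sum_congr rfl fun i _ ↦ ?_
    rw [inv_pow, ← one_div, div_div, mul_comm]
    push_cast
    rfl
  have hgeom : |(p : ℝ)⁻¹| ^ (K + 1) / (1 - |(p : ℝ)⁻¹|) = 1 / (p - 1) * ((p : ℝ) ^ K)⁻¹ := by
    rw [abs_of_pos (by positivity), pow_succ, inv_pow]
    field_simp
  have hprime : primeWt p = Real.log p / (p - 1) := if_pos hp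
  rw [eulerWt, if_pos hp, one_div, hsum, ← neg_add', abs_neg, add_comm]
  refine (Real.abs_log_sub_add_sum_range_le hinv K).trans ?_
  rw [hgeom, hprime, ← mul_assoc]
  refine mul_le_mul_of_nonneg_right ?_ (by positivity)
  rw [mul_div_assoc', div_le_div_iff_of_pos_right hp₂]
  linarith

lemma mangoldtLogSum_eq (v : ℝ) : mangoldtLogSum v =
    ∑ p ∈ Finset.Icc 1 ⌊Real.exp v⌋₊ with p.Prime,
      ∑ k ∈ Finset.Icc 1 (p.log ⌊Real.exp v⌋₊), 1 / (k * (p : ℝ) ^ k) := by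
  simp only [mangoldtLogSum, div_eq_mul_inv]
  rw [sum_vonMangoldt_mul fun n ↦ (n * Real.log n)⁻¹]
  refine Finset.sum_congr rfl fun p hp ↦ Finset.sum_congr rfl fun k _ ↦ ?_
  have hlog := Real.log_pos (Nat.one_lt_cast.2 (Finset.mem_filter.1 hp).2.one_lt)
  rw [Nat.cast_pow, Real.log_pow]
  field_simp

lemma abs_eulerSum_sub_mangoldtLogSum_le (v : ℝ) :
    |eulerSum v - mangoldtLogSum v| ≤ 2 * (primeErr v - mangoldtErr v) := by
  rw [mangoldtLogSum_eq, eulerSum, Finset.sum_filter, ← Finset.sum_sub_distrib,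
    primeErr_sub_mangoldtErr, Finset.mul_sum]
  refine (Finset.abs_sum_le_sum_abs _ _).trans (Finset.sum_le_sum fun n _ ↦ ?_)
  by_cases hn : n.Prime
  · rw [if_pos hn]
    exact abs_eulerWt_sub_sum_le hn _
  · simp [eulerWt, primeWt, hn]

lemma tendsto_eulerSum_sub_mangoldtLogSum (hRH : RiemannHypothesis) :
    Tendsto (fun v ↦ eulerSum v - mangoldtLogSum v) atTop (𝓝 0) := by
  have herr := ((tendsto_primeErr hRH).sub (tendsto_mangoldtErr hRH)).const_mul 2
  rw [sub_zero, mul_zero] at herr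
  exact squeeze_zero_norm abs_eulerSum_sub_mangoldtLogSum_le herr

lemma tendsto_gammaErr (hRH : RiemannHypothesis) : Tendsto gammaErr atTop (𝓝 0) := by
  set γ := Real.eulerMascheroniConstant
  obtain ⟨c, hc⟩ := exists_tendsto_gammaErr hRH
  have hlim : Tendsto (fun v ↦ mangoldtLogSum v - Real.log v - γ) atTop (𝓝 (-c)) := by
    have h := (((tendsto_primeErr hRH).div_atTop tendsto_id).sub hc).sub
      (tendsto_eulerSum_sub_mangoldtLogSum hRH)
    rw [zero_sub, sub_zero] at h
    refine h.congr fun v ↦ ?_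
    rw [gammaErr, eulerErr, id]
    ring
  have hlaplace (s : ℝ) (hs : 0 < s) :
      HasLaplace (fun v ↦ ((mangoldtLogSum v - Real.log v - γ : ℝ) : ℂ)) s
        ((Real.log (riemannZeta (1 + s : ℝ)).re + Real.log s : ℝ) / s) := by
    have h := ((hasLaplace_mangoldtLogSum hs).sub (hasLaplace_log hs)).sub
      (hasLaplace_const (s := s) (by simpa using hs) γ)
    convert h using 1
    · simp
    · push_cast
      ring
  have hzero := (Complex.continuous_ofReal.tendsto 0).comp tendsto_log_riemannZeta_add_log
  have hval := tendsto_mul_laplace hlaplace ((Complex.continuous_ofReal.tendsto _).comp hlim)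
  have hcongr := hval.congr' <| by
    filter_upwards [self_mem_nhdsWithin] with s hs
    exact mul_div_cancel₀ _ (Complex.ofReal_ne_zero.2 (ne_of_gt hs))
  have hc₀ := tendsto_nhds_unique hcongr hzero
  simp only [Complex.ofReal_inj, neg_eq_zero] at hc₀
  rwa [hc₀] at hc

lemma eventually_abs_gammaErr_sub_le (hRH : RiemannHypothesis) : ∀ᶠ u in atTop,
    |gammaErr u - 2 * (Real.exp (-u / 2) / u ^ 2)| ≤ 0.04999 * (Real.exp (-u / 2) / u ^ 2) := by
  filter_upwards [eventually_abs_gammaErr_sub_sub_le hRH] with u hu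
  have hleft := (((tendsto_gammaErr hRH).const_sub (gammaErr u)).sub_const
    (2 * (Real.exp (-u / 2) / u ^ 2))).abs
  have hright := ((tendsto_exp_neg_div_atTop two_pos).const_mul 3).const_add
    (0.04999 * (Real.exp (-u / 2) / u ^ 2))
  rw [sub_zero] at hleft
  rw [mul_zero, add_zero] at hright
  exact le_of_tendsto_of_tendsto hleft hright ((eventually_ge_atTop u).mono hu)

end Mertens

section GammaR

open Asymptotics Topology

lemma abs_exp_sub_mul_one_add_sub_le {y z : ℝ} (hy : |y| ≤ 1 / 4) (hz : |z| ≤ 1 / 4) :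
    |Real.exp (z - y) * (1 + y) - 1 - z| ≤ 10 * (y ^ 2 + z ^ 2) := by
  have hexp : |Real.exp (z - y) - 1 - (z - y)| ≤ (z - y) ^ 2 :=
    Real.abs_exp_sub_one_sub_id_le ((abs_sub z y).trans (by linarith))
  have hy' : |1 + y| ≤ 2 := (abs_add_le 1 y).trans (by rw [abs_one]; linarith)
  calc |Real.exp (z - y) * (1 + y) - 1 - z|
      = |(Real.exp (z - y) - 1 - (z - y)) * (1 + y) + (z - y) * y| := by ring_nf
    _ ≤ |Real.exp (z - y) - 1 - (z - y)| * |1 + y| + |(z - y) * y| := by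
        rw [← abs_mul]
        exact abs_add_le _ _
    _ ≤ (z - y) ^ 2 * 2 + |(z - y) * y| := by gcongr
    _ ≤ 10 * (y ^ 2 + z ^ 2) := by
        rcases abs_cases ((z - y) * y) with ⟨h, -⟩ | ⟨h, -⟩ <;> rw [h] <;>
          nlinarith [sq_nonneg (z + y), sq_nonneg z, sq_nonneg y]

lemma eventually_sq_primeErr_div_le (hRH : RiemannHypothesis) : ∀ᶠ u in atTop,
    (primeErr u / u) ^ 2 ≤ 0.00000001 * (Real.exp (-u / 2) / u ^ 2) := by
  filter_upwards [(primeErr_isLittleO hRH).bound (show (0 : ℝ) < 0.0001 by norm_num)] with u hu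
  have hexp : Real.exp (-u / 4) ^ 2 = Real.exp (-u / 2) := by
    rw [← Real.exp_nat_mul]
    ring_nf
  have hsq : primeErr u ^ 2 ≤ 0.00000001 * Real.exp (-u / 2) := by
    rw [Real.norm_eq_abs, Real.norm_of_nonneg (Real.exp_pos _).le] at hu
    have h := pow_le_pow_left₀ (abs_nonneg _) hu 2
    rw [sq_abs, mul_pow, hexp] at h
    exact h.trans_eq (by norm_num)
  rw [div_pow, ← mul_div_assoc]
  gcongr

lemma eventually_abs_exp_mul_sub_le (hRH : RiemannHypothesis) : ∀ᶠ u in atTop,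
    |Real.exp (-eulerErr u) * (1 + primeErr u / u) - 1 - 2 * (Real.exp (-u / 2) / u ^ 2)| ≤
      0.05 * (Real.exp (-u / 2) / u ^ 2) := by
  filter_upwards [eventually_abs_gammaErr_sub_le hRH, eventually_sq_primeErr_div_le hRH,
    (tendsto_exp_neg_div_atTop two_pos).eventually_le_const
      (show (0 : ℝ) < 0.0000001 by norm_num),
    eventually_ge_atTop 1] with u hgamma hprime hexp hu
  set E := Real.exp (-u / 2) / u ^ 2
  have hE₀ : 0 ≤ E := by positivity
  have hE : E ≤ 0.0000001 := (div_le_self (Real.exp_pos _).le (one_le_pow₀ hu)).trans hexp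
  have hgamma' := abs_le.1 hgamma
  have hgamma_le : |gammaErr u| ≤ 3 * E := abs_le.2 ⟨by linarith, by linarith⟩
  have hgamma_sq : gammaErr u ^ 2 ≤ 0.0000009 * E := by
    rw [← sq_abs]
    nlinarith [abs_nonneg (gammaErr u)]
  have hprime_le : |primeErr u / u| ≤ 1 / 4 := abs_le_of_sq_le_sq (by nlinarith) (by norm_num)
  have happrox := abs_exp_sub_mul_one_add_sub_le hprime_le (hgamma_le.trans (by linarith))
  have hexponent : gammaErr u - primeErr u / u = -eulerErr u := by
    rw [gammaErr, sub_sub_cancel_left]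
  rw [hexponent, abs_le] at happrox
  exact abs_le.2 ⟨by linarith, by linarith⟩

lemma eventually_abs_sub_one_mul_sub_two_le (hRH : RiemannHypothesis) : ∀ᶠ u in atTop,
    |(Real.exp (-eulerErr u) * (1 + primeErr u / u) - 1) * Real.exp (u / 2) * u ^ 2 - 2| ≤
      0.05 := by
  filter_upwards [eventually_abs_exp_mul_sub_le hRH, eventually_gt_atTop 0] with u hu hu₀
  have hscale : 0 < Real.exp (u / 2) * u ^ 2 := by positivity
  have hinv : Real.exp (-u / 2) / u ^ 2 = (Real.exp (u / 2) * u ^ 2)⁻¹ := by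
    rw [neg_div, Real.exp_neg, mul_inv, div_eq_mul_inv]
  rw [hinv, ← div_eq_mul_inv, ← div_eq_mul_inv, le_div_iff₀ hscale] at hu
  nth_rw 2 [← abs_of_pos hscale] at hu
  rwa [← abs_mul, sub_mul, div_mul_cancel₀ _ hscale.ne', ← mul_assoc] at hu

lemma image_nth_prime_range {r : ℕ} (hr : 1 ≤ r) :
    (Finset.range r).image (Nat.nth Nat.Prime) =
      (Finset.Icc 1 (nthPrime r)).filter Nat.Prime := by
  have hmono := Nat.nth_strictMono Nat.infinite_setOfPred_prime
  ext n
  simp only [Finset.mem_image, Finset.mem_range, Finset.mem_filter, Finset.mem_Icc, nthPrime]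
  constructor
  · rintro ⟨i, hi, rfl⟩
    have hp : (Nat.nth Nat.Prime i).Prime := Nat.prime_nth_prime i
    exact ⟨⟨hp.one_le, hmono.monotone (by lia)⟩, hp⟩
  · rintro ⟨⟨-, hle⟩, hn⟩
    refine ⟨Nat.count Nat.Prime n, ?_, Nat.nth_count hn⟩
    rw [← Nat.nth_count hn, hmono.le_iff_le] at hle
    lia

lemma prod_one_sub_one_div_prime (N : ℕ) :
    ∏ p ∈ Finset.Icc 1 N with p.Prime, (1 - 1 / (p : ℝ)) =
      Real.exp (-∑ n ∈ Finset.Icc 1 N, eulerWt n) := by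
  rw [← Finset.sum_neg_distrib, Real.exp_sum, Finset.prod_filter]
  refine Finset.prod_congr rfl fun n _ ↦ ?_
  unfold eulerWt
  split_ifs with hn
  · have hn₁ : 1 / (n : ℝ) < 1 := (div_lt_one (mod_cast hn.pos)).2 (mod_cast hn.one_lt)
    rw [neg_neg, Real.exp_log (sub_pos.2 hn₁)]
  · rw [neg_zero, Real.exp_zero]

lemma gammaR_eq {r : ℕ} (hr : 1 ≤ r) :
    gammaR r = Real.exp (-eulerSum (Real.log (nthPrime r))) *
      (Real.eulerMascheroniConstant + primeSum (Real.log (nthPrime r))) := by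
  have hpos : (0 : ℝ) < nthPrime r := mod_cast (Nat.prime_nth_prime (r - 1)).pos
  rw [gammaR, gammaP, image_nth_prime_range hr, prod_one_sub_one_div_prime, Finset.sum_filter,
    eulerSum, primeSum, Real.exp_log hpos, Nat.floor_natCast]
  rfl

lemma gammaR_mul_exp_eq {r : ℕ} (hr : 1 ≤ r) {u : ℝ} (hu : u = Real.log (nthPrime r))
    (hu₀ : 0 < u) :
    gammaR r * Real.exp Real.eulerMascheroniConstant =
      Real.exp (-eulerErr u) * (1 + primeErr u / u) := by
  have hexp : Real.exp (-eulerErr u) =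
      Real.exp (-eulerSum u) * u * Real.exp Real.eulerMascheroniConstant := by
    rw [eulerErr, neg_sub, sub_sub_eq_add_sub, Real.exp_sub, Real.exp_add, Real.exp_log hu₀,
      Real.exp_neg]
    field_simp
  rw [gammaR_eq hr, ← hu, hexp, primeErr]
  field_simp
  ring

end GammaR

/-- On RH, `γ_r = e^{-γ}(1 + g(p_r)/(√p_r (log p_r)^2))` with `1.95 ≤ g(p_r) ≤ 2.05`
for `p_r` large. -/
theorem gammaR_asymp_of_RH (hRH : RiemannHypothesis) :
    ∃ x₀ : ℝ, ∀ r : ℕ, 1 ≤ r → x₀ ≤ (nthPrime r : ℝ) →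
      1.95 ≤ (gammaR r * Real.exp Real.eulerMascheroniConstant - 1) *
          Real.sqrt (nthPrime r) * (Real.log (nthPrime r)) ^ 2 ∧
      (gammaR r * Real.exp Real.eulerMascheroniConstant - 1) *
          Real.sqrt (nthPrime r) * (Real.log (nthPrime r)) ^ 2 ≤ 2.05 := by
  obtain ⟨x₀, hx₀⟩ := eventually_atTop.1 (Real.tendsto_log_atTop.eventually
    ((eventually_abs_sub_one_mul_sub_two_le hRH).and (eventually_gt_atTop 0)))
  refine ⟨x₀, fun r hr hrx ↦ ?_⟩
  obtain ⟨hbound, hlog⟩ := hx₀ _ hrx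
  have hpos : (0 : ℝ) < nthPrime r := mod_cast (Nat.prime_nth_prime (r - 1)).pos
  have hsqrt : Real.exp (Real.log (nthPrime r) / 2) = Real.sqrt (nthPrime r) := by
    rw [← Real.log_sqrt hpos.le, Real.exp_log (Real.sqrt_pos.2 hpos)]
  rw [← gammaR_mul_exp_eq hr rfl hlog, hsqrt, abs_le] at hbound
  exact ⟨by linarith, by linarith⟩
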